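/- arXiv:1710.03635 — 9 statements merged into one kernel-verified Lean document; each statement's English description precedes it below -/
import Mathlib

section
/- Let L ⊆ Λ be an extension of fields such that L is algebraically closed in Λ, and let D be a finite field extension of L. If the tensor product D ⊗_L Λ is a field and is a Galois extension of Λ, then D is a Galois extension of L. -/
open scoped TensorProduct

attribute [local instance] Algebra.TensorProduct.rightAlgebra

theorem aux_minpoly_map {L Λ Δ : Type} [Field L] [Field Λ] [Field Δ]
    [Algebra L Λ] [Algebra Λ Δ] [Algebra L Δ] [IsScalarTower L Λ Δ]
    (halg : ∀ x : Λ, IsAlgebraic L x → x ∈ (algebraMap L Λ).range)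
    (x : Δ) (hx : IsIntegral L x) :
    minpoly Λ x = (minpoly L x).map (algebraMap L Λ) := by
  have hd := minpoly.dvd_map_of_isScalarTower L Λ x
  have hm : (minpoly Λ x).Monic := minpoly.monic hx.tower_top
  have hl : minpoly Λ x ∈ Polynomial.lifts (algebraMap L Λ) := by
    rw [Polynomial.lifts_iff_coeff_lifts]
    intro n
    exact halg _ (Polynomial.isIntegral_coeff_of_dvd _ _ (minpoly.monic hx) hm hd n).isAlgebraic
  obtain ⟨q, hq, -, hqm⟩ := Polynomial.lifts_and_natDegree_eq_and_monic hl hm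
  have h0 : Polynomial.aeval x q = 0 := by
    rw [← Polynomial.aeval_map_algebraMap Λ, hq, minpoly.aeval]
  refine Polynomial.eq_of_monic_of_associated hm ((minpoly.monic hx).map _)
    (associated_of_dvd_dvd hd ?_)
  rw [← hq]
  exact Polynomial.map_dvd _ (minpoly.dvd L x h0)

theorem aux_closure_galois {L Λ Δ : Type} [Field L] [Field Λ] [Field Δ]
    [Algebra L Λ] [Algebra Λ Δ] [Algebra L Δ] [IsScalarTower L Λ Δ] [IsGalois Λ Δ]
    (halg : ∀ x : Λ, IsAlgebraic L x → x ∈ (algebraMap L Λ).range) :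
    IsGalois L (algebraicClosure L Δ) := by
  have key : ∀ x : algebraicClosure L Δ,
      minpoly Λ (x : Δ) = (minpoly L x).map (algebraMap L Λ) := fun x => by
    have hx : IsIntegral L (x : Δ) := (mem_algebraicClosure_iff'.1 x.2)
    rw [aux_minpoly_map halg _ hx, IntermediateField.minpoly_eq]
  have hsep : Algebra.IsSeparable L (algebraicClosure L Δ) := ⟨fun x => by
    have h := Algebra.IsSeparable.isSeparable Λ (x : Δ)
    rw [IsSeparable, key] at h
    exact Polynomial.separable_map _ |>.1 h⟩
  have hn : Normal L (algebraicClosure L Δ) := by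
    refine normal_iff.2 fun x => ⟨Algebra.IsIntegral.isIntegral x, ?_⟩
    apply Splits.algebraicClosure
    have h := Normal.splits (F := Λ) inferInstance (x : Δ)
    rwa [key, Polynomial.map_map, ← IsScalarTower.algebraMap_eq] at h
  exact ⟨⟩

theorem aux_surj {L Λ Δ D : Type} [Field L] [Field Λ] [Field Δ] [Field D]
    [Algebra L Λ] [Algebra Λ Δ] [Algebra L Δ] [IsScalarTower L Λ Δ] [IsGalois Λ Δ]
    [Algebra L D] [FiniteDimensional L D] [FiniteDimensional Λ Δ]
    (halg : ∀ x : Λ, IsAlgebraic L x → x ∈ (algebraMap L Λ).range)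
    (hr : Module.finrank Λ Δ ≤ Module.finrank L D)
    (f : D →ₐ[L] algebraicClosure L Δ) : Function.Surjective f := by
  have := aux_closure_galois (L := L) (Λ := Λ) (Δ := Δ) halg
  intro a
  let F : IntermediateField L (algebraicClosure L Δ) := f.fieldRange ⊔ IntermediateField.adjoin L {a}
  have h1 : FiniteDimensional L f.fieldRange :=
    LinearMap.finiteDimensional_range f.toLinearMap
  have h2 : FiniteDimensional L (IntermediateField.adjoin L {a}) :=
    IntermediateField.adjoin.finiteDimensional (Algebra.IsIntegral.isIntegral a)
  have h3 : FiniteDimensional L F := IntermediateField.finiteDimensional_sup _ _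
  obtain ⟨g, hg⟩ := Field.exists_primitive_element L F
  have hF : Module.finrank L F = (minpoly L g).natDegree := by
    rw [← IntermediateField.adjoin.finrank (Algebra.IsIntegral.isIntegral g), hg,
      IntermediateField.finrank_top']
  have hd : (minpoly L g).natDegree ≤ Module.finrank Λ Δ := by
    have hgi : IsIntegral L ((g : algebraicClosure L Δ) : Δ) :=
      mem_algebraicClosure_iff'.1 g.1.2
    have h := minpoly.natDegree_le (A := Λ) ((g : algebraicClosure L Δ) : Δ)
    rw [aux_minpoly_map halg _ hgi, Polynomial.natDegree_map, ← IntermediateField.minpoly_eq,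
      ← IntermediateField.minpoly_eq] at h
    exact h
  have hfr : Module.finrank L f.fieldRange = Module.finrank L D :=
    (AlgEquiv.ofInjectiveField f).toLinearEquiv.finrank_eq.symm
  have : f.fieldRange = F :=
    IntermediateField.eq_of_le_of_finrank_le le_sup_left (by omega)
  have ha : a ∈ f.fieldRange := by
    rw [this]
    exact (le_sup_right : _ ≤ F) (IntermediateField.mem_adjoin_simple_self L a)
  exact ha

/-- If `L` is algebraically closed in `Λ`, `D/L` is a finite field extension, and
`D ⊗_L Λ` is a field (expressed by an isomorphism with a field `Δ`) which is Galois
over `Λ`, then `D/L` is Galois. -/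
theorem descent_galois_of_tensor_galois
    (L Λ D : Type) [Field L] [Field Λ] [Field D]
    [Algebra L Λ] [Algebra L D] [FiniteDimensional L D]
    (halg : ∀ x : Λ, IsAlgebraic L x → x ∈ (algebraMap L Λ).range)
    (Δ : Type) [Field Δ] [Algebra Λ Δ] [IsGalois Λ Δ]
    (iso : (D ⊗[L] Λ) ≃ₐ[Λ] Δ) :
    IsGalois L D := by
  letI : Algebra L Δ := ((algebraMap Λ Δ).comp (algebraMap L Λ)).toAlgebra
  haveI : IsScalarTower L Λ Δ := IsScalarTower.of_algebraMap_eq fun _ => rfl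
  let e : (Λ ⊗[L] D) ≃ₐ[Λ] Δ := (Algebra.TensorProduct.commRight L Λ D).trans iso
  have hfin : FiniteDimensional Λ Δ := Module.Finite.equiv e.toLinearEquiv
  have hr : Module.finrank Λ Δ = Module.finrank L D := by
    rw [← e.toLinearEquiv.finrank_eq, Module.finrank_baseChange]
  let f0 : D →ₐ[L] Δ := (e.toAlgHom.restrictScalars L).comp Algebra.TensorProduct.includeRight
  let f : D →ₐ[L] algebraicClosure L Δ :=
    f0.codRestrict (algebraicClosure L Δ).toSubalgebra fun d =>
      mem_algebraicClosure_iff'.2 ((Algebra.IsIntegral.isIntegral d).map f0)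
  have := aux_closure_galois (L := L) (Λ := Λ) (Δ := Δ) halg
  exact IsGalois.of_algEquiv
    (AlgEquiv.ofBijective f ⟨f.injective, aux_surj halg hr.le f⟩).symm
end

section
/- Let p be a prime and let k₁ ⊆ k₂ be an extension of fields of characteristic p such that the algebraic closure of k₁ in k₂ is a separable extension of k₁. Write F₁ = k₁((t)) ⊆ F₂ = k₂((t)). Let α ∈ k₂ be a nonzero element that does not lie in (the image of) k₁, and set E := F₂[Y]/(Y^p − Y − α·t^{−1}). Then E is a Galois field extension of F₂ of degree p, and E is not induced by any degree p Galois field extension of F₁: there is no field extension E₁ of F₁ with [E₁ : F₁] = p and E₁/F₁ Galois such that E₁ ⊗_{F₁} F₂ is isomorphic to E as an F₂-algebra. -/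
open Polynomial

open scoped TensorProduct

attribute [local instance] Algebra.TensorProduct.rightAlgebra

/-- The ring homomorphism `k₁((t)) →+* k₂((t))` applying a ring homomorphism
`f : k₁ →+* k₂` to each coefficient of a Laurent series. -/
noncomputable def lsMap {R S : Type*} [CommRing R] [CommRing S]
    (f : R →+* S) : LaurentSeries R →+* LaurentSeries S where
  toFun x := x.map f
  map_one' := by ext g; by_cases h : g = 0 <;> simp [h]
  map_mul' x y := HahnSeries.map_mul f.toNonUnitalRingHom
  map_zero' := by ext g; simp
  map_add' x y := HahnSeries.map_add f.toAddMonoidHom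

theorem ps_coeff_pow {k : Type*} [Field k] (p : ℕ) [Fact p.Prime] [CharP k p]
    (f : PowerSeries k) (m : ℕ) :
    PowerSeries.coeff m (f ^ p) =
      if p ∣ m then (PowerSeries.coeff (m / p) f) ^ p else 0 := by
  have hp : p ≠ 0 := (Fact.out : p.Prime).ne_zero
  have : ExpChar k p := ExpChar.prime Fact.out
  have h : PowerSeries.map (frobenius k p) (PowerSeries.expand p hp f) = f ^ p :=
    MvPowerSeries.map_frobenius_expand p hp
  rw [← h, PowerSeries.coeff_map, PowerSeries.coeff_expand]
  split_ifs with h1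
  · simp [frobenius_def]
  · simp

theorem ls_coeff_pow {k : Type*} [Field k] (p : ℕ) [Fact p.Prime] [CharP k p]
    (w : LaurentSeries k) (n : ℤ) :
    (w ^ p).coeff (p * n) = (w.coeff n) ^ p := by
  have hp : p ≠ 0 := (Fact.out : p.Prime).ne_zero
  have hp0 : (0 : ℤ) < p := by positivity
  have h1 : w ^ p = HahnSeries.single (p * w.order) 1 *
      (HahnSeries.ofPowerSeries ℤ k (w.powerSeriesPart ^ p)) := by
    conv_lhs => rw [← LaurentSeries.single_order_mul_powerSeriesPart w]
    rw [mul_pow, HahnSeries.single_pow, map_pow (HahnSeries.ofPowerSeries ℤ k)]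
    simp
  have h2 : (p : ℤ) * n = p * (n - w.order) + p * w.order := by ring
  rw [h1, h2, HahnSeries.coeff_single_mul_add, one_mul]
  by_cases h : w.order ≤ n
  · obtain ⟨m, hm⟩ := Int.eq_ofNat_of_zero_le (sub_nonneg.2 h)
    have hn : n = w.order + m := by omega
    rw [hm, ← Nat.cast_mul, LaurentSeries.coeff_coe_powerSeries, ps_coeff_pow p]
    rw [if_pos (dvd_mul_right _ _), Nat.mul_div_cancel_left _ (Nat.pos_of_ne_zero hp), LaurentSeries.powerSeriesPart_coeff, hn]
  · rw [HahnSeries.coeff_eq_zero_of_lt_order (x := w) (i := n) (by omega), zero_pow hp]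
    rw [HahnSeries.ofPowerSeries_apply, HahnSeries.embDomain_of_notMem_range]
    rintro ⟨m, hm⟩
    have : (p : ℤ) * (n - w.order) < 0 := mul_neg_of_pos_of_neg hp0 (by omega)
    have hm' : (m : ℤ) = p * (n - w.order) := hm
    omega

theorem mem_of_pow_mem {k₁ k₂ : Type*} [Field k₁] [Field k₂] (p : ℕ) [Fact p.Prime] [CharP k₁ p]
    [Algebra k₁ k₂] [Algebra.IsSeparable k₁ (algebraicClosure k₁ k₂)] (x : k₂)
    (hx : x ^ p ∈ (algebraMap k₁ k₂).range) : x ∈ (algebraMap k₁ k₂).range := by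
  have : ExpChar k₁ p := ExpChar.prime Fact.out
  obtain ⟨y, hy⟩ := hx
  have hp : p ≠ 0 := (Fact.out : p.Prime).ne_zero
  have halg : IsAlgebraic k₁ x := by
    refine IsAlgebraic.of_pow (Nat.pos_of_ne_zero hp) (hy ▸ isAlgebraic_algebraMap y)
  let x' : algebraicClosure k₁ k₂ := ⟨x, mem_algebraicClosure_iff.2 halg⟩
  have h1 : x' ∈ perfectClosure k₁ (algebraicClosure k₁ k₂) := by
    rw [mem_perfectClosure_iff_pow_mem p]
    refine ⟨1, y, ?_⟩
    apply Subtype.ext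
    simpa using hy
  rw [perfectClosure.eq_bot_of_isSeparable, IntermediateField.mem_bot] at h1
  obtain ⟨z, hz⟩ := h1
  exact ⟨z, congrArg Subtype.val hz⟩

theorem coeff_key {k₁ k₂ : Type*} [Field k₁] [Field k₂] (p : ℕ) [Fact p.Prime] [CharP k₁ p]
    [CharP k₂ p]
    [Algebra k₁ k₂] [Algebra.IsSeparable k₁ (algebraicClosure k₁ k₂)] (α : k₂)
    (F : LaurentSeries k₁) (w : LaurentSeries k₂)
    (h : w ^ p - w = HahnSeries.single (-1 : ℤ) α + lsMap (algebraMap k₁ k₂) F) :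
    α ∈ (algebraMap k₁ k₂).range := by
  have hp1 : 1 < p := (Fact.out : p.Prime).one_lt
  have hF : ∀ n, (lsMap (algebraMap k₁ k₂) F).coeff n = algebraMap k₁ k₂ (F.coeff n) :=
    fun n => rfl
  have hlow : ∃ N : ℕ, ∀ m : ℕ, N ≤ m → w.coeff (-(p : ℤ) ^ m) = 0 := by
    refine ⟨(-w.order).toNat, fun m hm => HahnSeries.coeff_eq_zero_of_lt_order ?_⟩
    have : m < p ^ m := Nat.lt_pow_self hp1
    have : (m : ℤ) < (p : ℤ) ^ m := by exact_mod_cast this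
    omega
  obtain ⟨N, hN⟩ := hlow
  have key : ∀ j m : ℕ, N ≤ m + j → w.coeff (-(p : ℤ) ^ m) ∈ (algebraMap k₁ k₂).range := by
    intro j
    induction j with
    | zero => intro m hm; rw [hN m hm]; exact zero_mem _
    | succ j ih =>
      intro m hm
      apply mem_of_pow_mem p
      have h1 := ih (m + 1) (by omega)
      have h2 := congrArg (fun x => HahnSeries.coeff x (-(p : ℤ) ^ (m + 1))) h
      have h3 : (w ^ p).coeff (-(p : ℤ) ^ (m + 1)) = (w.coeff (-(p : ℤ) ^ m)) ^ p := by
        rw [← ls_coeff_pow p]; congr 1; ring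
      have h4 : (-(p : ℤ) ^ (m + 1)) ≠ -1 := by
        have : 1 < p ^ (m + 1) := Nat.one_lt_pow (by omega) hp1
        have : (1 : ℤ) < (p : ℤ) ^ (m + 1) := by exact_mod_cast this
        omega
      simp only [HahnSeries.coeff_sub, HahnSeries.coeff_add, h3, hF,
        HahnSeries.coeff_single_of_ne h4, zero_add] at h2
      rw [sub_eq_iff_eq_add] at h2
      rw [h2]
      exact add_mem ⟨_, rfl⟩ h1
  have h0 := key N 0 (by omega)
  have h2 := congrArg (fun x => HahnSeries.coeff x (-1 : ℤ)) h
  have h3 : (w ^ p).coeff (-1) = 0 := by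
    have h1 : w ^ p = HahnSeries.single (p * w.order) 1 *
        (HahnSeries.ofPowerSeries ℤ k₂ (w.powerSeriesPart ^ p)) := by
      conv_lhs => rw [← LaurentSeries.single_order_mul_powerSeriesPart w]
      rw [mul_pow, HahnSeries.single_pow, map_pow (HahnSeries.ofPowerSeries ℤ k₂)]
      simp
    have h4 : (-1 : ℤ) = (-1 - p * w.order) + p * w.order := by ring
    rw [h1, h4, HahnSeries.coeff_single_mul_add, one_mul]
    by_cases h : 0 ≤ -1 - p * w.order
    · obtain ⟨m, hm⟩ := Int.eq_ofNat_of_zero_le h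
      rw [hm, LaurentSeries.coeff_coe_powerSeries, ps_coeff_pow p, if_neg]
      rintro ⟨c, rfl⟩
      have : (p : ℤ) ∣ 1 := ⟨-(w.order + c), by push_cast at hm; linarith⟩
      have := Int.le_of_dvd (by norm_num) this
      omega
    · rw [HahnSeries.ofPowerSeries_apply, HahnSeries.embDomain_of_notMem_range]
      rintro ⟨m, hm⟩
      simp at hm
      omega
  simp only [HahnSeries.coeff_sub, HahnSeries.coeff_add, h3, hF,
        HahnSeries.coeff_single_same, zero_sub] at h2
  have : α = -w.coeff (-1) - algebraMap k₁ k₂ (F.coeff (-1)) := by rw [h2]; ring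
  rw [this]
  simp only [pow_zero] at h0
  exact sub_mem (neg_mem h0) ⟨_, rfl⟩

theorem as_nat {K : Type*} [Field K] (p : ℕ) [Fact p.Prime] [CharP K p] (x : K)
    (h : x ^ p = x) : ∃ n : ℤ, (n : K) = x := by
  rw [← mem_bot_iff_intCast p, Subfield.mem_bot_iff_pow_eq_self K p]
  exact h

theorem as_int_pow {K : Type*} [Field K] (p : ℕ) [Fact p.Prime] [CharP K p] (n : ℤ) :
    (n : K) ^ p = n := by
  rw [← Subfield.mem_bot_iff_pow_eq_self K p, mem_bot_iff_intCast p]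
  exact ⟨n, rfl⟩

theorem as_natDegree {K : Type*} [Field K] (p : ℕ) [Fact p.Prime] (a : K) :
    (X ^ p - X - C a : K[X]).natDegree = p := by
  have hp1 : 1 < p := (Fact.out : p.Prime).one_lt
  rw [natDegree_sub_C, FiniteField.X_pow_card_sub_X_natDegree_eq K hp1]

theorem as_monic {K : Type*} [Field K] (p : ℕ) [Fact p.Prime] (a : K) :
    (X ^ p - X - C a : K[X]).Monic := by
  have hp1 : 1 < p := (Fact.out : p.Prime).one_lt
  rw [sub_sub]
  apply monic_X_pow_sub
  rw [degree_X_add_C]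
  exact_mod_cast hp1

theorem as_splits {L : Type*} [Field L] (p : ℕ) [Fact p.Prime] [CharP L p] (a z : L)
    (hz : z ^ p - z = a) : (X ^ p - X - C a : L[X]).Splits := by
  have h1 : (X ^ p - X : L[X]).Splits := by
    have := (Subfield.splits_bot L p).map (Subfield.subtype _)
    simpa using this
  have h2 : (X ^ p - X - C a : L[X]) = (X ^ p - X : L[X]).comp (X - C z) := by
    simp only [sub_comp, pow_comp, X_comp]
    rw [sub_pow_char, ← hz]
    simp only [map_sub, map_pow]
    ring
  rw [h2]
  exact h1.comp_X_sub_C z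

theorem as_irreducible {K : Type*} [Field K] (p : ℕ) [Fact p.Prime] [CharP K p] (a : K)
    (h : ∀ w : K, w ^ p - w ≠ a) : Irreducible (X ^ p - X - C a : K[X]) := by
  have hpp : p.Prime := Fact.out
  have hdeg := as_natDegree p a
  let L := AlgebraicClosure K
  have : CharP L p := charP_of_injective_algebraMap (algebraMap K L).injective p
  obtain ⟨z, hz⟩ := IsAlgClosed.exists_aeval_eq_zero L (X ^ p - X - C a : K[X])
    (by rw [degree_eq_natDegree (as_monic p a).ne_zero, hdeg]; exact_mod_cast hpp.ne_zero)
  have hzi : IsIntegral K z := ⟨_, as_monic p a, hz⟩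
  have hzr : z ^ p - z = algebraMap K L a := by
    simpa [sub_eq_zero] using hz
  have hdvd := minpoly.dvd K z hz
  have hd : (minpoly K z).natDegree = p := by
    by_contra hne
    have hle : (minpoly K z).natDegree ≤ p := hdeg ▸ natDegree_le_of_dvd hdvd (as_monic p a).ne_zero
    have hlt := lt_of_le_of_ne hle hne
    have hpos := minpoly.natDegree_pos hzi
    set m := (minpoly K z).map (algebraMap K L) with hm
    have hs : m.Splits := IsAlgClosed.splits _
    have hmm : m.Monic := (minpoly.monic hzi).map _
    have hsum := hs.nextCoeff_eq_neg_sum_roots_of_monic hmm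
    have hcard : Multiset.card m.roots = (minpoly K z).natDegree := by
      rw [← hs.natDegree_eq_card_roots, natDegree_map]
    have hroot : ∀ s : Multiset L, (∀ r ∈ s, r ^ p - r = algebraMap K L a) →
        ∃ n : ℤ, s.sum = Multiset.card s * z + n := by
      intro s
      induction s using Multiset.induction_on with
      | empty => intro _; exact ⟨0, by simp⟩
      | cons r s ih =>
        intro hr
        obtain ⟨n, hn⟩ := ih fun r' h' => hr r' (Multiset.mem_cons_of_mem h')
        have h1 := hr r (Multiset.mem_cons_self _ _)
        obtain ⟨n', hn'⟩ := as_nat p (r - z) (by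
          rw [sub_pow_char]; linear_combination h1 - hzr)
        refine ⟨n + n', ?_⟩
        rw [Multiset.sum_cons, hn, Multiset.card_cons]
        push_cast
        rw [hn']; ring
    obtain ⟨n, hn⟩ := hroot m.roots (by
      intro r hr
      have h1 : aeval r (minpoly K z) = 0 := by
        have := isRoot_of_mem_roots hr
        rwa [hm, IsRoot, eval_map_algebraMap] at this
      have h2 : aeval r (X ^ p - X - C a : K[X]) = 0 := by
        obtain ⟨q, hq⟩ := hdvd
        rw [hq, map_mul, h1, zero_mul]
      simpa [sub_eq_zero] using h2)
    rw [hcard] at hn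
    have hc : ((minpoly K z).natDegree : K) ≠ 0 := by
      intro h0
      rw [CharP.cast_eq_zero_iff K p] at h0
      exact absurd (Nat.le_of_dvd hpos h0) (by omega)
    have hnc : m.nextCoeff = algebraMap K L (minpoly K z).nextCoeff := by
      rw [hm, nextCoeff_map (algebraMap K L).injective]
    have hcL : ((minpoly K z).natDegree : L) ≠ 0 := by
      intro h0
      apply hc
      apply (algebraMap K L).injective
      simpa using h0
    have hz2 : z = algebraMap K L ((-(minpoly K z).nextCoeff - n) / (minpoly K z).natDegree) := by
      rw [map_div₀, map_sub, map_neg, map_natCast, map_intCast, eq_div_iff hcL, ← hnc, hsum, hn]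
      ring
    apply h _
    apply (algebraMap K L).injective
    rw [map_sub, map_pow, ← hz2]
    exact hzr
  have : minpoly K z = X ^ p - X - C a :=
    (eq_of_monic_of_associated (minpoly.monic hzi) (as_monic p a)
      (associated_of_dvd_of_natDegree_le hdvd (as_monic p a).ne_zero (by omega)))
  rw [← this]
  exact minpoly.irreducible hzi

theorem as_galois {K : Type*} [Field K] (p : ℕ) [Fact p.Prime] [CharP K p] (a : K)
    [hI : Fact (Irreducible (X ^ p - X - C a : K[X]))] :
    IsGalois K (AdjoinRoot (X ^ p - X - C a : K[X])) := by
  have hp1 : 1 < p := (Fact.out : p.Prime).one_lt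
  have : CharP (AdjoinRoot (X ^ p - X - C a : K[X])) p :=
    charP_of_injective_algebraMap (algebraMap K _).injective p
  have hsep : (X ^ p - X - C a : K[X]).Separable := by
    rw [separable_def]
    refine ⟨0, -1, ?_⟩
    have hd : derivative (X ^ p : K[X]) = 0 := by
      rw [derivative_X_pow, CharP.cast_eq_zero]; simp
    simp [hd]
  have hz : (AdjoinRoot.root (X ^ p - X - C a : K[X])) ^ p - AdjoinRoot.root (X ^ p - X - C a : K[X])
      = algebraMap K _ a := by
    have := AdjoinRoot.eval₂_root (X ^ p - X - C a : K[X])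
    simpa [sub_eq_zero] using this
  have : (X ^ p - X - C a : K[X]).IsSplittingField K (AdjoinRoot (X ^ p - X - C a : K[X])) := by
    constructor
    · have := as_splits p _ _ hz
      simpa using this
    · rw [eq_top_iff, ← AdjoinRoot.adjoinRoot_eq_top]
      apply Algebra.adjoin_mono
      rw [Set.singleton_subset_iff, mem_rootSet]
      refine ⟨(as_monic p a).ne_zero, ?_⟩
      rw [AdjoinRoot.aeval_eq, AdjoinRoot.mk_self]
  exact IsGalois.of_separable_splitting_field hsep

theorem as_exists {K L : Type*} [Field K] [Field L] [Algebra K L] (p : ℕ) [Fact p.Prime]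
    [CharP K p] [IsGalois K L] (h : Module.finrank K L = p) :
    ∃ (σ : L ≃ₐ[K] L) (y : L) (f : K), σ y = y - 1 ∧ y ^ p - y = algebraMap K L f := by
  classical
  have hpp : p.Prime := Fact.out
  have : CharP L p := charP_of_injective_algebraMap (algebraMap K L).injective p
  have : FiniteDimensional K L := Module.finite_of_finrank_pos (h ▸ hpp.pos)
  have hcard : Nat.card (L ≃ₐ[K] L) = p := by rw [IsGalois.card_aut_eq_finrank, h]
  have : Nontrivial (L ≃ₐ[K] L) := by
    rw [← Finite.one_lt_card_iff_nontrivial, hcard]; exact hpp.one_lt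
  obtain ⟨σ, hσ⟩ := exists_ne (1 : L ≃ₐ[K] L)
  have hgen : ∀ τ : L ≃ₐ[K] L, τ ∈ Subgroup.zpowers σ := fun τ => mem_zpowers_of_prime_card hcard hσ
  have hord : orderOf σ = p := by
    rw [orderOf_eq_card_of_forall_mem_zpowers hgen, hcard]
  obtain ⟨θ, hθ⟩ := Algebra.trace_surjective K L 1
  have htr : ∑ i ∈ Finset.range p, (σ ^ i) θ = 1 := by
    have h1 := trace_eq_sum_automorphisms (K := K) θ
    rw [hθ, map_one] at h1
    rw [h1, ← IsCyclic.image_range_orderOf hgen, hord, Finset.sum_image]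
    intro i hi j hj hij
    have hi' : i < orderOf σ := by rw [hord]; simpa using hi
    have hj' : j < orderOf σ := by rw [hord]; simpa using hj
    exact pow_injOn_Iio_orderOf hi' hj' hij
  set y : L := ∑ i ∈ Finset.range p, (i : L) * (σ ^ i) θ with hy
  have hσy : σ y = y - 1 := by
    have h1 : σ y = ∑ i ∈ Finset.range p, (((i + 1 : ℕ) : L) * (σ ^ (i + 1)) θ - (σ ^ (i + 1)) θ) := by
      rw [hy, map_sum]
      refine Finset.sum_congr rfl fun i _ => ?_
      rw [map_mul, map_natCast, pow_succ', AlgEquiv.mul_apply]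
      push_cast
      ring
    have h2 := Finset.sum_range_succ' (fun i => (i : L) * (σ ^ i) θ) p
    have h3 := Finset.sum_range_succ (fun i => (i : L) * (σ ^ i) θ) p
    have h4 := Finset.sum_range_succ' (fun i => (σ ^ i) θ) p
    have h5 := Finset.sum_range_succ (fun i => (σ ^ i) θ) p
    have h6 : (σ ^ p) θ = θ := by rw [← hord, pow_orderOf_eq_one]; rfl
    rw [h1, Finset.sum_sub_distrib]
    simp only [pow_zero, AlgEquiv.one_apply, h6, CharP.cast_eq_zero, Nat.cast_zero] at h2 h3 h4 h5
    linear_combination (-1) * h2 + h3 + h4 - h5 - htr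
  have hfix : ∀ τ : L ≃ₐ[K] L, τ (y ^ p - y) = y ^ p - y := by
    intro τ
    have hs : σ ∈ MulAction.stabilizer (L ≃ₐ[K] L) (y ^ p - y) := by
      rw [MulAction.mem_stabilizer_iff, AlgEquiv.smul_def, map_sub, map_pow, hσy, sub_pow_char]
      simp
    have := (Subgroup.zpowers_le.2 hs) (hgen τ)
    exact this
  obtain ⟨f, hf⟩ := (IsGalois.mem_range_algebraMap_iff_fixed _).2 hfix
  exact ⟨σ, y, f, hσy, hf.symm⟩

theorem as_final {K E : Type*} [Field K] [Field E] [Algebra K E] (p : ℕ) [Fact p.Prime]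
    [CharP K p] [IsGalois K E] (h : Module.finrank K E = p) (τ : E ≃ₐ[K] E) (z Y : E)
    (a F : K) (hz : z ^ p - z = algebraMap K E a) (hY : Y ^ p - Y = algebraMap K E F)
    (hτ : τ Y = Y - 1) : ∃ (w : K) (n : ℤ), w ^ p - w = a + n * F := by
  have hpp : p.Prime := Fact.out
  have : CharP E p := charP_of_injective_algebraMap (algebraMap K E).injective p
  have : FiniteDimensional K E := Module.finite_of_finrank_pos (h ▸ hpp.pos)
  have hcard : Nat.card (E ≃ₐ[K] E) = p := by rw [IsGalois.card_aut_eq_finrank, h]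
  have hne : τ ≠ 1 := by
    rintro rfl
    rw [AlgEquiv.one_apply] at hτ
    exact one_ne_zero (α := E) (by linear_combination hτ)
  have h1 : (τ z) ^ p - τ z = algebraMap K E a := by
    rw [← map_pow, ← map_sub, hz, AlgEquiv.commutes]
  obtain ⟨n, hn⟩ := as_nat p (τ z - z) (by rw [sub_pow_char]; linear_combination h1 - hz)
  have hs : τ ∈ MulAction.stabilizer (E ≃ₐ[K] E) (z + n * Y) := by
    rw [MulAction.mem_stabilizer_iff, AlgEquiv.smul_def, map_add, map_mul, map_intCast, hτ]
    linear_combination -hn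
  obtain ⟨w, hw⟩ := (IsGalois.mem_range_algebraMap_iff_fixed (F := K) (z + n * Y)).2 fun τ' =>
    (Subgroup.zpowers_le.2 hs) (mem_zpowers_of_prime_card hcard hne (g' := τ'))
  refine ⟨w, n, (algebraMap K E).injective ?_⟩
  rw [map_sub, map_pow, hw, map_add, map_mul, map_intCast, add_pow_char, mul_pow, as_int_pow, ← hz, ← hY]
  ring

theorem artinSchreier_not_induced_by_galois
    (p : ℕ) (hp : p.Prime) (k₁ k₂ : Type) [Field k₁] [Field k₂] [CharP k₁ p] [CharP k₂ p]
    [Algebra k₁ k₂] [Algebra.IsSeparable k₁ (algebraicClosure k₁ k₂)]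
    (α : k₂) (hα : α ≠ 0) (hα' : α ∉ (algebraMap k₁ k₂).range) :
    letI : Algebra (LaurentSeries k₁) (LaurentSeries k₂) :=
      (lsMap (algebraMap k₁ k₂)).toAlgebra
    Irreducible (X ^ p - X - C (HahnSeries.single (-1 : ℤ) α) :
        Polynomial (LaurentSeries k₂)) ∧
    (∀ [Fact (Irreducible (X ^ p - X - C (HahnSeries.single (-1 : ℤ) α) :
        Polynomial (LaurentSeries k₂)))],
      IsGalois (LaurentSeries k₂)
        (AdjoinRoot (X ^ p - X - C (HahnSeries.single (-1 : ℤ) α) :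
          Polynomial (LaurentSeries k₂))) ∧
      Module.finrank (LaurentSeries k₂)
        (AdjoinRoot (X ^ p - X - C (HahnSeries.single (-1 : ℤ) α) :
          Polynomial (LaurentSeries k₂))) = p) ∧
    ¬ ∃ (E₁ : Type) (_ : Field E₁) (_ : Algebra (LaurentSeries k₁) E₁),
        Module.finrank (LaurentSeries k₁) E₁ = p ∧
        IsGalois (LaurentSeries k₁) E₁ ∧
        Nonempty ((E₁ ⊗[LaurentSeries k₁] LaurentSeries k₂) ≃ₐ[LaurentSeries k₂]
          AdjoinRoot (X ^ p - X - C (HahnSeries.single (-1 : ℤ) α) :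
            Polynomial (LaurentSeries k₂))) := by
  let inst : Algebra (LaurentSeries k₁) (LaurentSeries k₂) :=
      (lsMap (algebraMap k₁ k₂)).toAlgebra
  have : Fact p.Prime := ⟨hp⟩
  have hc1 : CharP (LaurentSeries k₁) p :=
    charP_of_injective_ringHom (f := (HahnSeries.C : k₁ →+* LaurentSeries k₁))
      HahnSeries.C_injective p
  have hc2 : CharP (LaurentSeries k₂) p :=
    charP_of_injective_ringHom (f := (HahnSeries.C : k₂ →+* LaurentSeries k₂))
      HahnSeries.C_injective p
  have hirr : Irreducible (X ^ p - X - C (HahnSeries.single (-1 : ℤ) α) :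
        Polynomial (LaurentSeries k₂)) := by
    apply as_irreducible p
    intro w hw
    exact hα' (coeff_key p α 0 w (by rw [hw, map_zero, add_zero]))
  have hrank : Module.finrank (LaurentSeries k₂)
        (AdjoinRoot (X ^ p - X - C (HahnSeries.single (-1 : ℤ) α) :
          Polynomial (LaurentSeries k₂))) = p := by
    rw [(AdjoinRoot.powerBasis hirr.ne_zero).finrank, AdjoinRoot.powerBasis_dim, as_natDegree p]
  refine ⟨hirr, fun {_} => ⟨as_galois p _, hrank⟩, ?_⟩
  rintro ⟨E₁, _, _, hfin, hgal, ⟨e⟩⟩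
  have : Fact (Irreducible (X ^ p - X - C (HahnSeries.single (-1 : ℤ) α) :
        Polynomial (LaurentSeries k₂))) := ⟨hirr⟩
  have := as_galois p (HahnSeries.single (-1 : ℤ) α : LaurentSeries k₂)
  obtain ⟨σ, y, f, hσ, hf⟩ := as_exists (K := LaurentSeries k₁) (L := E₁) p hfin
  let s : E₁ ⊗[LaurentSeries k₁] LaurentSeries k₂ ≃ₐ[LaurentSeries k₁]
      E₁ ⊗[LaurentSeries k₁] LaurentSeries k₂ := Algebra.TensorProduct.congr σ AlgEquiv.refl
  let s' : E₁ ⊗[LaurentSeries k₁] LaurentSeries k₂ ≃ₐ[LaurentSeries k₂]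
      E₁ ⊗[LaurentSeries k₁] LaurentSeries k₂ :=
    AlgEquiv.ofRingEquiv (f := s.toRingEquiv) (by
      intro r
      change s ((1 : E₁) ⊗ₜ[LaurentSeries k₁] r) = (1 : E₁) ⊗ₜ[LaurentSeries k₁] r
      simp [s])
  have hz := AdjoinRoot.eval₂_root (X ^ p - X - C (HahnSeries.single (-1 : ℤ) α) :
        Polynomial (LaurentSeries k₂))
  have hs'y : s' (y ⊗ₜ 1) = y ⊗ₜ 1 - 1 := by
    change s (y ⊗ₜ[LaurentSeries k₁] (1 : LaurentSeries k₂)) = _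
    simp only [s, Algebra.TensorProduct.congr_apply, Algebra.TensorProduct.map_tmul]
    change (σ y) ⊗ₜ[LaurentSeries k₁] (1 : LaurentSeries k₂) = _
    rw [hσ, TensorProduct.sub_tmul]; rfl
  have hY : (y ⊗ₜ[LaurentSeries k₁] (1 : LaurentSeries k₂)) ^ p - y ⊗ₜ 1 =
      algebraMap (LaurentSeries k₂) (E₁ ⊗[LaurentSeries k₁] LaurentSeries k₂)
        (lsMap (algebraMap k₁ k₂) f) := by
    rw [Algebra.TensorProduct.tmul_pow, one_pow, ← TensorProduct.sub_tmul, hf]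
    change _ = (1 : E₁) ⊗ₜ[LaurentSeries k₁] (algebraMap (LaurentSeries k₁) (LaurentSeries k₂) f)
    rw [Algebra.algebraMap_eq_smul_one, Algebra.algebraMap_eq_smul_one, TensorProduct.smul_tmul]
  obtain ⟨w, n, hw⟩ := as_final p hrank ((e.symm.trans s').trans e)
    (AdjoinRoot.root _) (e (y ⊗ₜ 1)) (HahnSeries.single (-1 : ℤ) α) (lsMap (algebraMap k₁ k₂) f)
    (by simpa [sub_eq_zero] using hz)
    (by rw [← map_pow, ← map_sub, hY, AlgEquiv.commutes])
    (by simp [hs'y])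
  exact hα' (coeff_key p α (n * f) w (by rw [hw, map_mul, map_intCast]))
end

section
/- Let p be a prime, let k₁ ⊆ k₂ be an extension of fields of characteristic p, and let α ∈ k₂. If there exist β ∈ k₁((t)) and γ ∈ k₂((t)) such that α·t^{−1} − β = γ^p − γ holds in k₂((t)), then α is purely inseparable over k₁; that is, there exists n ≥ 0 such that α^{p^n} lies in (the image of) k₁. -/
theorem aux_pow_coeff (p : ℕ) (hp : p.Prime) (k : Type) [Field k] [CharP k p] (N : ℕ) :
    ∀ γ : LaurentSeries k, (∀ i : ℤ, i < -N → γ.coeff i = 0) →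
      (∀ n : ℤ, n < 0 → (γ ^ p).coeff (p * n) = γ.coeff n ^ p) ∧
      (∀ m : ℤ, m < 0 → ¬ (p : ℤ) ∣ m → (γ ^ p).coeff m = 0) := by
  haveI : Fact p.Prime := ⟨hp⟩
  haveI : CharP (LaurentSeries k) p :=
    charP_of_injective_ringHom (f := (HahnSeries.C : k →+* LaurentSeries k))
      HahnSeries.C_injective p
  have hp0 : (0 : ℤ) < p := by exact_mod_cast hp.pos
  induction N with
  | zero =>
    intro γ hγ
    have e : γ = HahnSeries.ofPowerSeries ℤ k (PowerSeries.mk fun n => γ.coeff n) := by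
      ext i
      rw [PowerSeries.coeff_coe]
      split_ifs with hi
      · exact hγ i (by simpa using hi)
      · rw [PowerSeries.coeff_mk, Int.natAbs_of_nonneg (not_lt.mp hi)]
    have key : ∀ m : ℤ, m < 0 → (γ ^ p).coeff m = 0 := by
      intro m hm
      rw [e, ← map_pow, PowerSeries.coeff_coe, if_pos hm]
    refine ⟨fun n hn => ?_, fun m hm _ => key m hm⟩
    rw [key _ (mul_neg_of_pos_of_neg hp0 hn), hγ n (by simpa using hn), zero_pow hp.ne_zero]
  | succ N ih =>
    intro γ hγ
    set c := γ.coeff (-(N + 1 : ℤ)) with hc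
    set s : LaurentSeries k := HahnSeries.single (-(N + 1 : ℤ)) c with hs
    obtain ⟨h1, h2⟩ := ih (γ - s) (by
      intro i hi
      rw [HahnSeries.coeff_sub, hs, HahnSeries.coeff_single]
      split_ifs with h
      · rw [h, hc, sub_self]
      · rw [hγ i (by push_cast; omega), sub_zero])
    have e : γ ^ p = (γ - s) ^ p + HahnSeries.single (p * (-(N + 1 : ℤ))) (c ^ p) := by
      rw [sub_pow_char, hs, HahnSeries.single_pow, nsmul_eq_mul, sub_add_cancel]
    refine ⟨fun n hn => ?_, fun m hm hd => ?_⟩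
    · rw [e, HahnSeries.coeff_add, h1 n hn, HahnSeries.coeff_sub, sub_pow_char, hs,
        HahnSeries.coeff_single, HahnSeries.coeff_single]
      by_cases h : n = -(N + 1 : ℤ)
      · rw [if_pos h, if_pos (by rw [h])]; ring
      · rw [if_neg h, if_neg (fun h' => h (mul_left_cancel₀ hp0.ne' h')), zero_pow hp.ne_zero]
        ring
    · rw [e, HahnSeries.coeff_add, h2 m hm hd, HahnSeries.coeff_single, if_neg, zero_add]
      rintro rfl
      exact hd ⟨_, rfl⟩

/-- If `α·t⁻¹ - β = γ^p - γ` in `k₂((t))` with `β ∈ k₁((t))` and `γ ∈ k₂((t))`, then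
`α` is purely inseparable over `k₁`. -/
theorem purelyInseparable_of_artinSchreier_eq
    (p : ℕ) (hp : p.Prime) (k₁ k₂ : Type) [Field k₁] [Field k₂] [CharP k₁ p] [CharP k₂ p]
    [Algebra k₁ k₂] (α : k₂) (β : LaurentSeries k₁) (γ : LaurentSeries k₂)
    (h : HahnSeries.single (-1 : ℤ) α - lsMap (algebraMap k₁ k₂) β = γ ^ p - γ) :
    ∃ n : ℕ, α ^ p ^ n ∈ (algebraMap k₁ k₂).range := by
  haveI : Fact p.Prime := ⟨hp⟩
  have hp0 : (0 : ℤ) < p := by exact_mod_cast hp.pos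
  obtain ⟨N, hN⟩ : ∃ N : ℕ, ∀ i : ℤ, i < -N → γ.coeff i = 0 :=
    ⟨γ.order.natAbs, fun i hi => HahnSeries.coeff_eq_zero_of_lt_order (by omega)⟩
  obtain ⟨h1, h2⟩ := aux_pow_coeff p hp k₂ N γ hN
  have hb : ∀ i, (lsMap (algebraMap k₁ k₂) β).coeff i ∈ (algebraMap k₁ k₂).range :=
    fun i => ⟨β.coeff i, rfl⟩
  have hcoef : ∀ i : ℤ, (HahnSeries.single (-1 : ℤ) α).coeff i
      - (lsMap (algebraMap k₁ k₂) β).coeff i = (γ ^ p).coeff i - γ.coeff i := by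
    intro i
    rw [← HahnSeries.coeff_sub, h, HahnSeries.coeff_sub]
  have step : ∀ j i : ℕ, N < i + j →
      γ.coeff (-(p : ℤ) ^ i) ^ p ^ j ∈ (algebraMap k₁ k₂).range := by
    intro j
    induction j with
    | zero =>
      intro i hi
      have : (i : ℤ) < (p : ℤ) ^ i := by exact_mod_cast Nat.lt_pow_self hp.one_lt
      rw [hN _ (by omega), zero_pow (by simp)]
      exact zero_mem _
    | succ j ih =>
      intro i hi
      have hpi : (0 : ℤ) < (p : ℤ) ^ i := by positivity
      have h3 := h1 (-(p : ℤ) ^ i) (by omega)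
      have e : (p : ℤ) * -(p : ℤ) ^ i = -(p : ℤ) ^ (i + 1) := by ring
      have h4 := hcoef (-(p : ℤ) ^ (i + 1))
      have hne : -(p : ℤ) ^ (i + 1) ≠ -1 := by
        intro h
        have h5 : (p : ℤ) ^ (i + 1) = 1 := by omega
        have h6 : p ^ (i + 1) = 1 := by exact_mod_cast h5
        exact (Nat.one_lt_pow (Nat.succ_ne_zero i) hp.one_lt).ne' h6
      rw [e] at h3
      rw [HahnSeries.coeff_single_of_ne hne, h3] at h4
      have h5 : γ.coeff (-(p : ℤ) ^ i) ^ p = γ.coeff (-(p : ℤ) ^ (i + 1))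
          - (lsMap (algebraMap k₁ k₂) β).coeff (-(p : ℤ) ^ (i + 1)) := by
        linear_combination -h4
      rw [pow_succ', pow_mul, h5, sub_pow_char_pow]
      exact sub_mem (ih (i + 1) (by omega)) (pow_mem (hb _) _)
  refine ⟨N + 1, ?_⟩
  have h4 := hcoef (-1)
  rw [HahnSeries.coeff_single_same, h2 (-1) (by norm_num) (by
    rw [dvd_neg]
    intro hd
    exact hp.one_lt.ne' (by exact_mod_cast Int.eq_one_of_dvd_one hp0.le hd))] at h4
  have h5 : α = (lsMap (algebraMap k₁ k₂) β).coeff (-1) - γ.coeff (-1) := by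
    linear_combination h4
  rw [h5, sub_pow_char_pow]
  refine sub_mem (pow_mem (hb _) _) ?_
  simpa using step (N + 1) 0 (by omega)
end

section
/- Let k₁ ⊆ k₂ be an extension of fields such that k₁ is algebraically closed in k₂. Then k₁((t)) is algebraically closed in k₂((t)): every element of k₂((t)) that is algebraic over k₁((t)) lies in the image of k₁((t)). -/
theorem lsMap_single' {R S : Type*} [CommRing R] [CommRing S] (f : R →+* S) (n : ℤ) (a : R) :
    lsMap f (HahnSeries.single n a) = HahnSeries.single n (f a) := by
  change (HahnSeries.single n a).map f = _
  exact HahnSeries.map_single (f : R →+* S).toMonoidWithZeroHom.toZeroHom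

theorem lsMap_ofPS {R S : Type*} [CommRing R] [CommRing S] (f : R →+* S) (p : PowerSeries R) :
    lsMap f (HahnSeries.ofPowerSeries ℤ R p) =
      HahnSeries.ofPowerSeries ℤ S (PowerSeries.map f p) := by
  ext n
  change f ((HahnSeries.ofPowerSeries ℤ R p).coeff n) = _
  rcases lt_or_ge n 0 with h | h
  · have h1 : ∀ (T : Type _) [CommRing T] (q : PowerSeries T),
        (HahnSeries.ofPowerSeries ℤ T q).coeff n = 0 := by
      intro T _ q
      rw [HahnSeries.ofPowerSeries_apply]
      apply HahnSeries.embDomain_of_notMem_range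
      rintro ⟨m, hm⟩
      simp at hm
      omega
    have h2 : ∀ (T : Type _) [CommRing T] (q : PowerSeries T),
        (HahnSeries.ofPowerSeries ℤ T q).coeff n = 0 := by
      intro T _ q
      rw [HahnSeries.ofPowerSeries_apply]
      apply HahnSeries.embDomain_of_notMem_range
      rintro ⟨m, hm⟩
      simp at hm
      omega
    rw [h1, h2, map_zero]
  · lift n to ℕ using h
    rw [LaurentSeries.coeff_coe_powerSeries, LaurentSeries.coeff_coe_powerSeries]
    simp

/-- reduction mod t of an algebraic relation -/
theorem constCoeff_isAlgebraic {k₁ k₂ : Type} [Field k₁] [Field k₂] [Algebra k₁ k₂]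
    (z : PowerSeries k₂) (P : Polynomial (PowerSeries k₁)) (hP : P ≠ 0)
    (hz : P.eval₂ (PowerSeries.map (algebraMap k₁ k₂)) z = 0) :
    IsAlgebraic k₁ (PowerSeries.constantCoeff z) := by
  classical
  letI : NormalizedGCDMonoid (PowerSeries k₁) := Classical.choice inferInstance
  have hinj : Function.Injective (PowerSeries.map (algebraMap k₁ k₂)) :=
    PowerSeries.map_injective _ (algebraMap k₁ k₂).injective
  have hQ : P.primPart.eval₂ (PowerSeries.map (algebraMap k₁ k₂)) z = 0 := by
    rw [P.eq_C_content_mul_primPart, Polynomial.eval₂_mul, Polynomial.eval₂_C] at hz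
    rcases mul_eq_zero.mp hz with h | h
    · exact absurd ((map_eq_zero_iff _ hinj).mp h) (by simpa [Polynomial.content_eq_zero_iff] using hP)
    · exact h
  refine ⟨P.primPart.map PowerSeries.constantCoeff, ?_, ?_⟩
  · intro h0
    have : Polynomial.C (PowerSeries.X : PowerSeries k₁) ∣ P.primPart := by
      rw [Polynomial.C_dvd_iff_dvd_coeff]
      intro i
      rw [PowerSeries.X_dvd_iff, ← Polynomial.coeff_map, h0, Polynomial.coeff_zero]
    exact PowerSeries.X_prime.not_isUnit (P.isPrimitive_primPart _ this)
  · have := congrArg PowerSeries.constantCoeff hQ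
    rw [Polynomial.hom_eval₂, map_zero] at this
    rw [Polynomial.aeval_def, Polynomial.eval₂_map, ← this]
    congr 1

/-- If `k₁` is algebraically closed in `k₂`, then `k₁((t))` is algebraically closed
in `k₂((t))`. -/
theorem laurentSeries_algebraicallyClosedIn
    (k₁ k₂ : Type) [Field k₁] [Field k₂] [Algebra k₁ k₂]
    (halg : ∀ x : k₂, IsAlgebraic k₁ x → x ∈ (algebraMap k₁ k₂).range) :
    letI : Algebra (LaurentSeries k₁) (LaurentSeries k₂) :=
      (lsMap (algebraMap k₁ k₂)).toAlgebra
    ∀ z : LaurentSeries k₂, IsAlgebraic (LaurentSeries k₁) z →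
      z ∈ Set.range (lsMap (algebraMap k₁ k₂)) := by
  letI inst : Algebra (LaurentSeries k₁) (LaurentSeries k₂) :=
    (lsMap (algebraMap k₁ k₂)).toAlgebra
  intro z hz
  have hmap : ∀ x, algebraMap (LaurentSeries k₁) (LaurentSeries k₂) x
    = lsMap (algebraMap k₁ k₂) x := fun _ => rfl
  have hconst : ∀ w : PowerSeries k₂,
      IsAlgebraic (LaurentSeries k₁) (HahnSeries.ofPowerSeries ℤ k₂ w) →
      PowerSeries.constantCoeff w ∈ (algebraMap k₁ k₂).range := by
    intro w hw
    apply halg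
    letI : Algebra (PowerSeries k₁) (LaurentSeries k₂) :=
      ((lsMap (algebraMap k₁ k₂)).comp (algebraMap (PowerSeries k₁) (LaurentSeries k₁))).toAlgebra
    haveI : IsScalarTower (PowerSeries k₁) (LaurentSeries k₁) (LaurentSeries k₂) :=
      IsScalarTower.of_algebraMap_eq' rfl
    obtain ⟨P, hP, hP0⟩ := (IsFractionRing.isAlgebraic_iff (PowerSeries k₁) (LaurentSeries k₁)
      (LaurentSeries k₂)).mpr hw
    refine constCoeff_isAlgebraic w P hP ?_
    apply HahnSeries.ofPowerSeries_injective (Γ := ℤ)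
    have hcomp : (HahnSeries.ofPowerSeries ℤ k₂).comp (PowerSeries.map (algebraMap k₁ k₂)) =
        algebraMap (PowerSeries k₁) (LaurentSeries k₂) := by
      refine RingHom.ext fun x => ?_
      have h1 : algebraMap (PowerSeries k₁) (LaurentSeries k₂) x =
        lsMap (algebraMap k₁ k₂) (algebraMap (PowerSeries k₁) (LaurentSeries k₁) x) := rfl
      rw [h1, LaurentSeries.coe_algebraMap, lsMap_ofPS, RingHom.comp_apply]
    rw [Polynomial.hom_eval₂, map_zero, hcomp]
    rw [Polynomial.aeval_def] at hP0
    exact hP0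
  have hcoeff : ∀ (n : ℕ) (w : PowerSeries k₂),
      IsAlgebraic (LaurentSeries k₁) (HahnSeries.ofPowerSeries ℤ k₂ w) →
      PowerSeries.coeff n w ∈ (algebraMap k₁ k₂).range := by
    intro n
    induction n with
    | zero => intro w hw; simpa using hconst w hw
    | succ n ih =>
      intro w hw
      obtain ⟨c, hc⟩ := hconst w hw
      obtain ⟨v, hv⟩ := PowerSeries.X_dvd_iff.mpr
        (show PowerSeries.constantCoeff (w - PowerSeries.C (algebraMap k₁ k₂ c)) = 0 by simp [hc])
      have hwv : w = PowerSeries.X * v + PowerSeries.C (algebraMap k₁ k₂ c) := by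
        rw [← hv]; ring
      have h1 : PowerSeries.coeff (n+1) w = PowerSeries.coeff n v := by
        rw [hwv]; simp [PowerSeries.coeff_C, PowerSeries.coeff_succ_X_mul]
      rw [h1]
      apply ih
      have h2 : HahnSeries.ofPowerSeries ℤ k₂ v =
          algebraMap (LaurentSeries k₁) (LaurentSeries k₂) (HahnSeries.single (-1) 1) *
          (HahnSeries.ofPowerSeries ℤ k₂ w -
            algebraMap (LaurentSeries k₁) (LaurentSeries k₂) (HahnSeries.single 0 c)) := by
        rw [hmap, hmap, lsMap_single', lsMap_single', hwv, map_add, map_mul,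
          HahnSeries.ofPowerSeries_X, HahnSeries.ofPowerSeries_C, HahnSeries.C_apply,
          add_sub_cancel_right, ← mul_assoc, HahnSeries.single_mul_single]
        simp
      rw [h2]
      exact (isAlgebraic_algebraMap _).mul (hw.sub (isAlgebraic_algebraMap _))
  have hw : IsAlgebraic (LaurentSeries k₁) (HahnSeries.ofPowerSeries ℤ k₂ z.powerSeriesPart) := by
    rw [LaurentSeries.ofPowerSeries_powerSeriesPart]
    refine IsAlgebraic.mul ?_ hz
    have := isAlgebraic_algebraMap (R := LaurentSeries k₁) (A := LaurentSeries k₂)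
      (HahnSeries.single (-z.order) 1)
    rwa [hmap, lsMap_single', map_one] at this
  choose a ha using fun n => hcoeff n _ hw
  refine ⟨HahnSeries.single z.order 1 * HahnSeries.ofPowerSeries ℤ k₁ (PowerSeries.mk a), ?_⟩
  rw [map_mul, lsMap_single', lsMap_ofPS, map_one]
  have : PowerSeries.map (algebraMap k₁ k₂) (PowerSeries.mk a) = z.powerSeriesPart := by
    ext n
    simp only [PowerSeries.coeff_map, PowerSeries.coeff_mk, ha]
  rw [this]
  exact LaurentSeries.single_order_mul_powerSeriesPart z
end

section
/- Let κ be a field of characteristic 3, let k₂ = κ(u) be the rational function field over κ, and let k₁ = κ(u²) ⊆ k₂ be the image of the κ-algebra embedding of the rational function field κ(x) into κ(u) sending x to u². Write F₁ = k₁((t)) ⊆ F₂ = k₂((t)). Let E := F₂[Y]/(Y³ − Y − u·t^{−1}) and E₀ := F₁[W]/(W³ + W² + W − u²·t^{−2}). Then E₀ is a field extension of F₁ of degree 3 that is not Galois over F₁, and E₀ ⊗_{F₁} F₂ is isomorphic to E as an F₂-algebra. -/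
open Polynomial

open scoped TensorProduct

attribute [local instance] Algebra.TensorProduct.rightAlgebra

/-- The subfield `κ(u²)` of the rational function field `κ(u)`. -/
noncomputable def kOne (κ : Type) [Field κ] : IntermediateField κ (RatFunc κ) :=
  IntermediateField.adjoin κ {(RatFunc.X : RatFunc κ) ^ 2}

/-- The element `u²` of `κ(u²)`. -/
noncomputable def uSq (κ : Type) [Field κ] : kOne κ :=
  ⟨(RatFunc.X : RatFunc κ) ^ 2,
    IntermediateField.subset_adjoin κ _ (Set.mem_singleton _)⟩

/-- The polynomial `W³ + W² + W - u²·t⁻²` over `F₁ = κ(u²)((t))`. -/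
noncomputable def fZero (κ : Type) [Field κ] : Polynomial (LaurentSeries (kOne κ)) :=
  X ^ 3 + X ^ 2 + X - C (HahnSeries.single (-2 : ℤ) (uSq κ))

/-- The polynomial `Y³ - Y - u·t⁻¹` over `F₂ = κ(u)((t))`. -/
noncomputable def fTwo (κ : Type) [Field κ] : Polynomial (LaurentSeries (RatFunc κ)) :=
  X ^ 3 - X - C (HahnSeries.single (-1 : ℤ) (RatFunc.X : RatFunc κ))

/-- The coefficientwise embedding `κ(u²)((t)) →+* κ(u)((t))`, as an algebra. -/
noncomputable def lsAlg (κ : Type) [Field κ] :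
    Algebra (LaurentSeries (kOne κ)) (LaurentSeries (RatFunc κ)) :=
  (lsMap (algebraMap (kOne κ) (RatFunc κ))).toAlgebra

section helpers

theorem aux_iso {F₁ F₂ : Type*} [Field F₁] [Field F₂] [Algebra F₁ F₂] (h3 : (3 : F₂) = 0)
    (a : F₂) (c : F₁) (ha : a ≠ 0) (hc : algebraMap F₁ F₂ c = a ^ 2) :
    Nonempty ((AdjoinRoot (X ^ 3 + X ^ 2 + X - C c : F₁[X]) ⊗[F₁] F₂) ≃ₐ[F₂]
      AdjoinRoot (X ^ 3 - X - C a : F₂[X])) := by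
  set p : F₁[X] := X ^ 3 + X ^ 2 + X - C c with hp
  set q : F₂[X] := X ^ 3 - X - C a with hq
  have h3E : (3 : AdjoinRoot q) = 0 := by
    have := congrArg (algebraMap F₂ (AdjoinRoot q)) h3
    rwa [map_ofNat, map_zero] at this
  have h3T : (3 : F₂ ⊗[F₁] AdjoinRoot p) = 0 := by
    have := congrArg (algebraMap F₂ (F₂ ⊗[F₁] AdjoinRoot p)) h3
    rwa [map_ofNat, map_zero] at this
  have hy : (AdjoinRoot.root q) ^ 3 - AdjoinRoot.root q - algebraMap F₂ _ a = 0 := by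
    have := AdjoinRoot.aeval_eq (f := q) q
    rw [AdjoinRoot.mk_self] at this
    simpa [hq] using this
  have hw : (AdjoinRoot.root p) ^ 3 + (AdjoinRoot.root p) ^ 2 + AdjoinRoot.root p
      - algebraMap F₁ _ c = 0 := by
    have := AdjoinRoot.aeval_eq (f := p) p
    rw [AdjoinRoot.mk_self] at this
    simpa [hp] using this
  set y := AdjoinRoot.root q with hydef
  have hcE : algebraMap F₁ (AdjoinRoot q) c = (algebraMap F₂ _ a) ^ 2 := by
    rw [IsScalarTower.algebraMap_apply F₁ F₂, hc, map_pow]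
  let f₀ : AdjoinRoot p →ₐ[F₁] AdjoinRoot q :=
    AdjoinRoot.liftAlgHom p (Algebra.ofId F₁ _) (y ^ 2) (by
      have : aeval (y ^ 2) p = 0 := by
        simp only [hp, map_sub, map_add, map_pow, aeval_X, aeval_C, hcE]
        linear_combination (y ^ 3 - y + algebraMap F₂ _ a) * hy + y ^ 4 * h3E
      exact this)
  have hf₀ : f₀ (AdjoinRoot.root p) = y ^ 2 := AdjoinRoot.liftAlgHom_root ..
  let f : F₂ ⊗[F₁] AdjoinRoot p →ₐ[F₂] AdjoinRoot q :=
    Algebra.TensorProduct.lift (Algebra.ofId F₂ _) f₀ (fun _ _ => Commute.all _ _)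
  let i : AdjoinRoot p →ₐ[F₁] F₂ ⊗[F₁] AdjoinRoot p := Algebra.TensorProduct.includeRight
  set W := i (AdjoinRoot.root p) with hW
  have hcT : algebraMap F₁ (F₂ ⊗[F₁] AdjoinRoot p) c = (algebraMap F₂ _ a) ^ 2 := by
    rw [IsScalarTower.algebraMap_apply F₁ F₂, hc, map_pow]
  have hWe : W ^ 3 + W ^ 2 + W = (algebraMap F₂ _ a) ^ 2 := by
    have := congrArg i hw
    rw [map_sub, map_add, map_add, map_pow, map_pow, AlgHom.commutes, map_zero, hcT] at this
    exact sub_eq_zero.mp this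
  set A := algebraMap F₂ (F₂ ⊗[F₁] AdjoinRoot p) a with hA
  set B := algebraMap F₂ (F₂ ⊗[F₁] AdjoinRoot p) a⁻¹ with hB
  have hAB : A * B = 1 := by rw [hA, hB, ← map_mul, mul_inv_cancel₀ ha, map_one]
  have hV2 : (B * (W * (W - 1))) ^ 2 = W := by
    linear_combination B ^ 2 * W * hWe + W * (A * B + 1) * hAB - B ^ 2 * W ^ 3 * h3T
  have hV3 : (B * (W * (W - 1))) * (W - 1) = A := by
    linear_combination B * hWe + A * hAB - B * W ^ 2 * h3T
  set V := B * (W * (W - 1)) with hV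
  let g : AdjoinRoot q →ₐ[F₂] F₂ ⊗[F₁] AdjoinRoot p :=
    AdjoinRoot.liftAlgHom q (Algebra.ofId F₂ _) V (by
      have : aeval V q = 0 := by
        simp only [hq, map_sub, map_pow, aeval_X, aeval_C]
        linear_combination V * hV2 + hV3
      exact this)
  have hg : g y = V := AdjoinRoot.liftAlgHom_root ..
  have hfW : f W = y ^ 2 := by simp [f, hW, i, hf₀]
  have hfg : f.comp g = AlgHom.id F₂ _ := by
    apply AdjoinRoot.algHom_ext
    change f (g y) = y
    rw [hg, hV, map_mul, map_mul, map_sub, map_one, hfW, hB, AlgHom.commutes]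
    have hABE : algebraMap F₂ (AdjoinRoot q) a⁻¹ * algebraMap F₂ (AdjoinRoot q) a = 1 := by
      rw [← map_mul, inv_mul_cancel₀ ha, map_one]
    linear_combination (algebraMap F₂ (AdjoinRoot q) a⁻¹ * y) * hy + y * hABE
  have hgf : g.comp f = AlgHom.id F₂ _ := by
    apply Algebra.TensorProduct.ext
    · ext
    · apply AdjoinRoot.algHom_ext
      change g (f W) = W
      rw [hfW, map_pow, hg, hV2]
  exact ⟨(Algebra.TensorProduct.commRight F₁ F₂ (AdjoinRoot p)).symm.trans
    (AlgEquiv.ofAlgHom f g hfg hgf)⟩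

theorem aux_natDegree {F : Type*} [Field F] (c : F) :
    (X ^ 3 + X ^ 2 + X - C c : F[X]).natDegree = 3 := by
  compute_degree!

theorem aux_monic {F : Type*} [Field F] (c : F) :
    (X ^ 3 + X ^ 2 + X - C c : F[X]).Monic := by
  monicity!

theorem aux_sq {F E : Type*} [Field F] [Field E] [Algebra F E] (h3 : (3 : F) = 0)
    (c : F) (hc : c ≠ 0) (hn : Module.finrank F E = 3) (w : E)
    (hm : minpoly F w = X ^ 3 + X ^ 2 + X - C c) (hG : IsGalois F E) : ∃ b : F, c = b ^ 2 := by
  have h3E : (3 : E) = 0 := by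
    have := congrArg (algebraMap F E) h3
    rwa [map_ofNat, map_zero] at this
  have hs := hG.to_normal.splits w
  have hw : w ^ 3 + w ^ 2 + w - algebraMap F E c = 0 := by
    have := minpoly.aeval F w
    rw [hm] at this
    simpa using this
  rw [hm] at hs
  have hne : (X ^ 3 + X ^ 2 + X - C c : F[X]).map (algebraMap F E) ≠ 0 :=
    ((aux_monic c).map _).ne_zero
  have hdeg : (X ^ 2 + C (w + 1) * X + C (w ^ 2 + w + 1) : E[X]).natDegree = 2 := by
    compute_degree!
  have hs2 : (X ^ 2 + C (w + 1) * X + C (w ^ 2 + w + 1) : E[X]).Splits := by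
    refine hs.of_dvd hne ⟨X - C w, ?_⟩
    have : algebraMap F E c = w ^ 3 + w ^ 2 + w := by linear_combination -hw
    simp only [Polynomial.map_sub, Polynomial.map_add, Polynomial.map_pow, map_X, map_C, this,
      map_add, map_pow, map_one]
    ring
  obtain ⟨x, hx⟩ := hs2.exists_eval_eq_zero (by
    intro h
    rw [natDegree_eq_of_degree_eq_some h] at hdeg
    exact absurd hdeg (by decide))
  simp only [eval_add, eval_pow, eval_X, eval_mul, eval_C] at hx
  have hsq : (2 * x + w + 1) ^ 2 = w := by
    linear_combination 4 * hx - (w ^ 2 + w + 1) * h3E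
  set s := 2 * x + w + 1
  have hcs : algebraMap F E c = (s * (s ^ 2 - 1)) ^ 2 := by
    rw [mul_pow, hsq]
    linear_combination -hw + w ^ 2 * h3E
  have := congrArg (Algebra.norm F) hcs
  rw [Algebra.norm_algebraMap, hn, map_pow] at this
  refine ⟨Algebra.norm F (s * (s ^ 2 - 1)) / c, ?_⟩
  rw [div_pow, ← this]
  field_simp

theorem aux_noroot {k : Type*} [Field k] (h3 : (3 : LaurentSeries k) = 0) (r : k) (hr : r ≠ 0)
    (w : LaurentSeries k) (hw : w ^ 3 + w ^ 2 + w = HahnSeries.single (-2 : ℤ) r) : False := by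
  have hc : (HahnSeries.single (-2 : ℤ) r : LaurentSeries k) ≠ 0 := HahnSeries.single_ne_zero hr
  have e : w * ((w - 1) * (w - 1)) = HahnSeries.single (-2 : ℤ) r := by
    linear_combination hw - w ^ 2 * h3
  have hne := e ▸ hc
  have h0 : w ≠ 0 := left_ne_zero_of_mul hne
  have h1 : w - 1 ≠ 0 := left_ne_zero_of_mul (right_ne_zero_of_mul hne)
  have ho := congrArg HahnSeries.order e
  rw [HahnSeries.order_mul h0 (mul_ne_zero h1 h1), HahnSeries.order_mul h1 h1,
    HahnSeries.order_single hr] at ho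
  have a1 := HahnSeries.min_order_le_order_add (x := w) (y := -1) (by rwa [← sub_eq_add_neg])
  have a2 := HahnSeries.min_order_le_order_add (x := w - 1) (y := 1) (by simpa using h0)
  rw [HahnSeries.order_neg, HahnSeries.order_one, ← sub_eq_add_neg] at a1
  rw [HahnSeries.order_one, sub_add_cancel] at a2
  omega

theorem aux_X (κ : Type) [Field κ] : (RatFunc.X : RatFunc κ) ∉ kOne κ := by
  intro h
  have ht : kOne κ = ⊤ := by
    rw [eq_top_iff, ← RatFunc.adjoin_X, IntermediateField.adjoin_le_iff]
    simpa using h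
  have h2 := RatFunc.finrank_eq_max_natDegree ((RatFunc.X : RatFunc κ) ^ 2)
  have h1 : Module.finrank (kOne κ) (RatFunc κ) = 1 := by
    rw [ht]; exact IntermediateField.finrank_top
  have e : (RatFunc.X : RatFunc κ) ^ 2 = algebraMap κ[X] _ (X ^ 2) := by simp
  unfold kOne at h1
  rw [h1, e, RatFunc.num_algebraMap, RatFunc.denom_algebraMap] at h2
  simp at h2

end helpers

set_option maxHeartbeats 1000000 in
/-- Over `F₁ = κ(u²)((t))` (with `char κ = 3`), the degree-3 non-Galois extension
`E₀ = F₁[W]/(W³ + W² + W - u²·t⁻²)` induces the Artin–Schreier extension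
`E = F₂[Y]/(Y³ - Y - u·t⁻¹)` of `F₂ = κ(u)((t))`. -/
theorem nonGalois_descent_example_char_three
    (κ : Type) [Field κ] [CharP κ 3] :
    letI : Algebra (LaurentSeries (kOne κ)) (LaurentSeries (RatFunc κ)) := lsAlg κ
    Irreducible (fZero κ) ∧
    ∀ [Fact (Irreducible (fZero κ))],
      Module.finrank (LaurentSeries (kOne κ)) (AdjoinRoot (fZero κ)) = 3 ∧
      ¬ IsGalois (LaurentSeries (kOne κ)) (AdjoinRoot (fZero κ)) ∧
      Nonempty
        ((AdjoinRoot (fZero κ) ⊗[LaurentSeries (kOne κ)] LaurentSeries (RatFunc κ))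
          ≃ₐ[LaurentSeries (RatFunc κ)] AdjoinRoot (fTwo κ)) := by

  letI : Algebra (LaurentSeries (kOne κ)) (LaurentSeries (RatFunc κ)) := lsAlg κ
  have h3κ : (3 : κ) = 0 := by exact_mod_cast CharP.cast_eq_zero κ 3
  have h3a : (3 : LaurentSeries (kOne κ)) = 0 := by
    have := congrArg ((HahnSeries.C (Γ := ℤ)).comp (algebraMap κ (kOne κ))) h3κ
    rwa [map_ofNat, map_zero] at this
  have h3b : (3 : LaurentSeries (RatFunc κ)) = 0 := by
    have := congrArg ((HahnSeries.C (Γ := ℤ)).comp (algebraMap κ (RatFunc κ))) h3κ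
    rwa [map_ofNat, map_zero] at this
  have hu : uSq κ ≠ 0 := by
    intro h
    have := congrArg (algebraMap (kOne κ) (RatFunc κ)) h
    rw [map_zero] at this
    exact pow_ne_zero 2 RatFunc.X_ne_zero this
  have hc0 : (HahnSeries.single (-2 : ℤ) (uSq κ) : LaurentSeries (kOne κ)) ≠ 0 :=
    HahnSeries.single_ne_zero hu
  have hX : (RatFunc.X : RatFunc κ) ≠ 0 := RatFunc.X_ne_zero
  have hcc : algebraMap (LaurentSeries (kOne κ)) (LaurentSeries (RatFunc κ))
      (HahnSeries.single (-2 : ℤ) (uSq κ)) =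
      (HahnSeries.single (-1 : ℤ) (RatFunc.X : RatFunc κ)) ^ 2 := by
    rw [HahnSeries.single_pow]
    change (HahnSeries.single (-2 : ℤ) (uSq κ)).map (algebraMap (kOne κ) (RatFunc κ)) = _
    ext n
    by_cases hn : n = -2
    · subst hn
      simp [uSq]
    · simp [hn]
  have hnd : (fZero κ).natDegree = 3 := aux_natDegree _
  have hmon : (fZero κ).Monic := aux_monic _
  refine ⟨?_, ?_⟩
  · refine irreducible_of_degree_le_three_of_not_isRoot (by rw [hnd]; decide) ?_
    intro w hw
    refine aux_noroot h3a (uSq κ) hu w ?_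
    have : w ^ 3 + w ^ 2 + w - HahnSeries.single (-2 : ℤ) (uSq κ) = 0 := by
      simpa [fZero, IsRoot] using hw
    exact sub_eq_zero.mp this
  · intro hirr
    have hfr : Module.finrank (LaurentSeries (kOne κ)) (AdjoinRoot (fZero κ)) = 3 := by
      rw [(AdjoinRoot.powerBasis hmon.ne_zero).finrank, AdjoinRoot.powerBasis_dim, hnd]
    refine ⟨hfr, ?_, ?_⟩
    · intro hG
      obtain ⟨b, hb⟩ := aux_sq h3a _ hc0 hfr (AdjoinRoot.root (fZero κ)) (by
        rw [AdjoinRoot.minpoly_root hmon.ne_zero, hmon.leadingCoeff, inv_one, C_1, mul_one]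
        rfl) hG
      rw [hb, map_pow, sq_eq_sq_iff_eq_or_eq_neg] at hcc
      have hco : (algebraMap (LaurentSeries (kOne κ)) (LaurentSeries (RatFunc κ)) b).coeff (-1)
        = ((b.coeff (-1) : kOne κ) : RatFunc κ) := rfl
      rcases hcc with h | h
      · rw [h, HahnSeries.coeff_single_same] at hco
        exact aux_X κ (hco ▸ (b.coeff (-1)).2)
      · rw [h, HahnSeries.coeff_neg, HahnSeries.coeff_single_same] at hco
        have := neg_mem (hco ▸ (b.coeff (-1)).2 : -(RatFunc.X : RatFunc κ) ∈ kOne κ)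
        rw [neg_neg] at this
        exact aux_X κ this
    · exact aux_iso h3b _ _ (HahnSeries.single_ne_zero hX) hcc
end

section
/- Let p be a prime, let D be a discrete valuation ring of characteristic p with maximal ideal 𝔪 and fraction field k₁, let D̂ be the 𝔪-adic completion of D with fraction field k₂, let D' = {y ∈ D̂ : y is algebraic over k₁}, let k₁' be the algebraic closure of k₁ in k₂, and assume the approximation property stated in the context. Let x̄ ∈ D be a uniformizer (a generator of 𝔪), and let ḡ ∈ D̂ be an element not lying in D'. Then for every nonzero e ∈ k₂, the element (ḡ^p + x̄)·e^p does not lie in k₁'. -/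
open IsDedekindDomain IsLocalRing

variable (p : ℕ) (D : Type) [CommRing D] [IsDomain D] [IsDiscreteValuationRing D]
  (v : HeightOneSpectrum D)

/-- `D' = {y ∈ D̂ : y is algebraic over k₁}`, the set of elements of the completed
valuation ring that are algebraic over the fraction field `k₁` of `D`. -/
def Dprime : Set (v.adicCompletionIntegers (FractionRing D)) :=
  {y | IsAlgebraic (FractionRing D) (y : v.adicCompletion (FractionRing D))}

/-- Artin-type approximation property for `D' ⊆ D̂` (a consequence of excellence of
`D`): solutions in `D̂` of polynomial systems over `D'` can be approximated
`𝔪`-adically by solutions in `D'`. -/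
def ApproxProperty : Prop :=
  ∀ f : MvPolynomial (Fin 2) (v.adicCompletionIntegers (FractionRing D)),
    (∀ m, MvPolynomial.coeff m f ∈ Dprime D v) →
    ∀ yhat : Fin 2 → (v.adicCompletionIntegers (FractionRing D)),
      MvPolynomial.eval yhat f = 0 →
      ∀ c : ℕ, 1 ≤ c →
        ∃ y : Fin 2 → (v.adicCompletionIntegers (FractionRing D)),
          (∀ i, y i ∈ Dprime D v) ∧ MvPolynomial.eval y f = 0 ∧
          ∀ i, y i - yhat i ∈
            Ideal.map (algebraMap D (v.adicCompletionIntegers (FractionRing D)))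
              (maximalIdeal D ^ c)

theorem aux_val (hv : v.asIdeal = maximalIdeal D)
    (xbar : D) (hx : Ideal.span {xbar} = maximalIdeal D) :
    Valued.v (algebraMap D (v.adicCompletion (FractionRing D)) xbar) = WithZero.exp (-1 : ℤ) := by
  have hx0 : xbar ≠ 0 := by
    rintro rfl
    apply v.ne_bot
    rw [hv, ← hx]; simp
  have h1 := v.intValuation_singleton hx0 (by rw [hv, hx])
  rw [← h1, ← v.valuation_of_algebraMap (K := FractionRing D),
    ← v.valuedAdicCompletion_eq_valuation']
  rfl

theorem aux_not_pow (hp : p.Prime) (z w : v.adicCompletion (FractionRing D))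
    (hz : Valued.v z = WithZero.exp (-1 : ℤ)) : w ^ p ≠ z := by
  intro h
  have hw : Valued.v w ≠ 0 := by
    intro h0
    rw [← h, map_pow, h0, zero_pow hp.ne_zero] at hz
    exact WithZero.exp_ne_zero hz.symm
  rw [← h, map_pow, ← WithZero.exp_log hw, ← WithZero.exp_nsmul] at hz
  have h2 := WithZero.exp_injective hz
  rw [nsmul_eq_mul] at h2
  have : (p : ℤ) ∣ 1 := ⟨-WithZero.log (Valued.v w), by linarith⟩
  exact hp.one_lt.ne' (by exact_mod_cast Int.eq_one_of_dvd_one (by positivity) this)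

theorem aux_int (z e : v.adicCompletion (FractionRing D)) (he : e ≠ 0)
    (hz : Valued.v z = WithZero.exp (-1 : ℤ)) : ∃ n : ℕ, Valued.v (z ^ n * e) ≤ 1 := by
  have hw : Valued.v e ≠ 0 := by simpa using he
  refine ⟨(WithZero.log (Valued.v e)).toNat, ?_⟩
  rw [map_mul, map_pow, hz, ← WithZero.exp_nsmul]
  conv_lhs => rw [← WithZero.exp_log hw]
  rw [← WithZero.exp_add, ← WithZero.exp_zero, WithZero.exp_le_exp]
  simp
  try omega

/-- If `xbar` is a uniformizer of the characteristic `p` discrete valuation ring `D` and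
`gbar ∈ D̂` does not lie in `D'`, then for every nonzero `e ∈ k₂ = Frac D̂`, the element
`(gbar^p + xbar)·e^p` does not lie in the algebraic closure `k₁'` of `k₁ = Frac D`
in `k₂`. -/
theorem pth_power_class_not_algebraic
    (hp : p.Prime) [CharP D p] (hv : v.asIdeal = maximalIdeal D)
    (happrox : ApproxProperty D v)
    (xbar : D) (hx : Ideal.span {xbar} = maximalIdeal D)
    (gbar : v.adicCompletionIntegers (FractionRing D)) (hgbar : gbar ∉ Dprime D v) :
    ∀ e : v.adicCompletion (FractionRing D), e ≠ 0 →
      ((gbar : v.adicCompletion (FractionRing D)) ^ p +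
          algebraMap D (v.adicCompletion (FractionRing D)) xbar) * e ^ p ∉
        algebraicClosure (FractionRing D) (v.adicCompletion (FractionRing D)) := by
  have hval := aux_val D v hv xbar hx
  set K := v.adicCompletion (FractionRing D) with hK
  set z : K := algebraMap D K xbar with hzdef
  have : Fact p.Prime := ⟨hp⟩
  have : CharP (FractionRing D) p :=
    charP_of_injective_algebraMap (IsFractionRing.injective D (FractionRing D)) p
  have : CharP K p :=
    charP_of_injective_algebraMap (algebraMap (FractionRing D) K).injective p
  have hzalg : IsAlgebraic (FractionRing D) z := by
    have : z = algebraMap (FractionRing D) K (algebraMap D (FractionRing D) xbar) := rfl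
    rw [this]; exact isAlgebraic_algebraMap _
  intro e₀ he₀ hmem
  rw [mem_algebraicClosure_iff] at hmem
  obtain ⟨n, hn⟩ := aux_int D v z e₀ he₀ hval
  have hz0 : z ≠ 0 := by
    intro h; rw [h, map_zero] at hval; exact WithZero.exp_ne_zero hval.symm
  have hH : IsAlgebraic (FractionRing D) (((gbar : K) ^ p + z) * (z ^ n * e₀) ^ p) := by
    have h2 := hmem.mul ((hzalg.pow n).pow p)
    have h3 : ((gbar : K) ^ p + z) * (z ^ n * e₀) ^ p
        = ((gbar : K) ^ p + z) * e₀ ^ p * (z ^ n) ^ p := by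
      rw [mul_pow, mul_assoc, mul_comm (e₀ ^ p)]
    rw [h3]; exact h2
  have he : z ^ n * e₀ ≠ 0 := mul_ne_zero (pow_ne_zero _ hz0) he₀
  generalize z ^ n * e₀ = e at hn hH he
  let O := v.adicCompletionIntegers (FractionRing D)
  let e' : O := ⟨e, hn⟩
  let z' : O := ⟨z, by
    show Valued.v z ≤ 1
    rw [hval, ← WithZero.exp_zero, WithZero.exp_le_exp]; norm_num⟩
  let h' : O := (gbar ^ p + z') * e' ^ p
  let f : MvPolynomial (Fin 2) O :=
    (MvPolynomial.X 0 ^ p + MvPolynomial.C z') * MvPolynomial.X 1 ^ p - MvPolynomial.C h'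
  let S : Subring O :=
    (algebraicClosure (FractionRing D) K).toSubring.comap (algebraMap O K)
  have hS : ∀ y : O, y ∈ S ↔ y ∈ Dprime D v := fun y => mem_algebraicClosure_iff
  have hzS : z' ∈ S := (hS _).2 hzalg
  have hhS : h' ∈ S := (hS _).2 hH
  have hfS : ∀ m, MvPolynomial.coeff m f ∈ Dprime D v := by
    intro m
    rw [← hS]
    let f₀ : MvPolynomial (Fin 2) S :=
      (MvPolynomial.X 0 ^ p + MvPolynomial.C ⟨z', hzS⟩) * MvPolynomial.X 1 ^ p
        - MvPolynomial.C ⟨h', hhS⟩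
    have : f = MvPolynomial.map S.subtype f₀ := by
      simp [f, f₀]
    rw [this, MvPolynomial.coeff_map]
    exact (MvPolynomial.coeff m f₀).2
  obtain ⟨y, hyD, hyf, -⟩ := happrox f hfS ![gbar, e'] (by simp [f, h']) 1 le_rfl
  have hy : ((y 0 : K) ^ p + z) * (y 1 : K) ^ p = ((gbar : K) ^ p + z) * e ^ p := by
    have : (y 0 ^ p + z') * y 1 ^ p = (gbar ^ p + z') * e' ^ p := by
      simpa [f, h', sub_eq_zero] using hyf
    exact congrArg (algebraMap O K) this
  have key : ((y 0 : K) * y 1 - gbar * e) ^ p = z * (e - y 1) ^ p := by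
    rw [sub_pow_char, sub_pow_char, mul_pow, mul_pow]
    linear_combination hy
  by_cases h1 : e - (y 1 : K) = 0
  · rw [h1, zero_pow hp.ne_zero, mul_zero] at key
    have h2 := pow_eq_zero_iff hp.ne_zero |>.1 key
    have h3 : (y 0 : K) = gbar := by
      rw [← sub_eq_zero.1 h1, ← sub_mul] at h2
      exact sub_eq_zero.1 ((mul_eq_zero.1 h2).resolve_right he)
    exact hgbar (by rw [← Subtype.ext h3]; exact hyD 0)
  · refine aux_not_pow p D v hp z (((y 0 : K) * y 1 - gbar * e) / (e - y 1)) hval ?_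
    rw [div_pow, key, mul_div_assoc, div_self (pow_ne_zero _ h1), mul_one]
end

section
/- Let L ⊆ E be a field extension, let Ω be a separable closure of E, let L^sep be the separable closure of L in Ω, and let φ : Aut_E(Ω) → Aut_L(L^sep) be the restriction homomorphism. Then the image of φ equals the subgroup of Aut_L(L^sep) consisting of those automorphisms that fix pointwise the intermediate field E ∩ L^sep := {a ∈ L^sep : a lies in the image of E in Ω}; in particular, the fixed field of the image of φ is E ∩ L^sep. -/
variable (L E Ω : Type) [Field L] [Field E] [Field Ω]
  [Algebra L E] [Algebra E Ω] [Algebra L Ω] [IsScalarTower L E Ω]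

/-- The restriction homomorphism `Aut_E(Ω) → Aut_L(L^sep)`, where `L^sep` is the
separable closure of `L` in `Ω`. -/
noncomputable def restrictionHom :
    (Ω ≃ₐ[E] Ω) →* (separableClosure L Ω ≃ₐ[L] separableClosure L Ω) where
  toFun σ := separableClosure.algEquivOfAlgEquiv (σ.restrictScalars L)
  map_one' := by
    ext x
    rfl
  map_mul' σ τ := by
    ext x
    rfl

/-- The intermediate field `E ∩ L^sep` of `L^sep/L`. -/
noncomputable def eCapSep : IntermediateField L (separableClosure L Ω) :=
  IntermediateField.comap (separableClosure L Ω).val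
    (IsScalarTower.toAlgHom L E Ω).fieldRange

theorem restrictionHom_coe_apply (σ : Ω ≃ₐ[E] Ω) (x : separableClosure L Ω) :
    ((restrictionHom L E Ω σ x : separableClosure L Ω) : Ω) = σ x := rfl

theorem restrictionHom_continuous [IsSepClosure E Ω] : Continuous (restrictionHom L E Ω) := by
  apply continuous_of_continuousAt_one _ (continuousAt_def.mpr _)
  intro N hN
  rw [map_one, krullTopology_mem_nhds_one_iff] at hN
  obtain ⟨M, hM, hO⟩ := hN
  obtain ⟨S, hS⟩ := IntermediateField.essFiniteType_iff.mp (inferInstance : Algebra.EssFiniteType L M)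
  have hint : Algebra.IsIntegral E Ω := inferInstance
  have h1 : (⋂ s ∈ S, (MulAction.stabilizer (Ω ≃ₐ[E] Ω) ((s : separableClosure L Ω) : Ω) :
      Set (Ω ≃ₐ[E] Ω))) ∈ nhds (1 : Ω ≃ₐ[E] Ω) := by
    rw [Filter.biInter_finset_mem]
    intro s _
    exact (stabilizer_isOpen_of_isIntegral (s : Ω)).mem_nhds (one_mem _)
  refine Filter.mem_of_superset h1 ?_
  intro σ hσ
  apply hO
  have h2 : M ≤ IntermediateField.fixedField (Subgroup.zpowers (restrictionHom L E Ω σ)) := by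
    rw [← hS, IntermediateField.adjoin_le_iff]
    intro s hs
    rw [SetLike.mem_coe, IntermediateField.mem_fixedField_iff]
    have h3 : restrictionHom L E Ω σ ∈ MulAction.stabilizer _ s := by
      rw [MulAction.mem_stabilizer_iff]
      apply Subtype.ext
      exact Set.mem_iInter₂.mp hσ s hs
    intro f hf
    exact (Subgroup.zpowers_le.mpr h3) hf
  exact (IntermediateField.le_iff_le _ _).mp h2 (Subgroup.mem_zpowers _)

theorem fixedField_range_restrictionHom [IsSepClosure E Ω] :
    IntermediateField.fixedField (restrictionHom L E Ω).range = eCapSep L E Ω := by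
  ext x
  rw [IntermediateField.mem_fixedField_iff]
  have key := InfiniteGalois.mem_range_algebraMap_iff_fixed (k := E) (x : Ω)
  constructor
  · intro h
    obtain ⟨e, he⟩ := key.mpr fun f => congrArg Subtype.val (h _ ⟨f, rfl⟩)
    exact ⟨e, he⟩
  · rintro ⟨e, he⟩ _ ⟨f, rfl⟩
    exact Subtype.ext (key.mp ⟨e, he⟩ f)

/-- The image of the restriction map `Aut_E(Ω) → Aut_L(L^sep)` is the subgroup fixing
`E ∩ L^sep` pointwise; in particular its fixed field is `E ∩ L^sep`. -/
theorem range_restrictionHom [IsSepClosure E Ω] :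
    (restrictionHom L E Ω).range = (eCapSep L E Ω).fixingSubgroup ∧
    IntermediateField.fixedField (restrictionHom L E Ω).range = eCapSep L E Ω := by
  have hf := fixedField_range_restrictionHom L E Ω
  refine ⟨?_, hf⟩
  have : IsSepClosed Ω := IsSepClosure.sep_closed E
  have : IsGalois L (separableClosure L Ω) := IsSepClosure.isGalois
  have : T2Space ((separableClosure L Ω) ≃ₐ[L] (separableClosure L Ω)) := krullTopology_t2
  have hc : IsClosed ((restrictionHom L E Ω).range : Set Gal(separableClosure L Ω/L)) := by
    rw [MonoidHom.coe_range]
    exact (isCompact_range (restrictionHom_continuous L E Ω)).isClosed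
  rw [← hf]
  exact (InfiniteGalois.fixingSubgroup_fixedField
    (⟨(restrictionHom L E Ω).range, hc⟩ : ClosedSubgroup _)).symm
end

section
/- Let L ⊆ E be a field extension, let Ω be a separable closure of E, let L^sep be the separable closure of L in Ω, and let φ : Aut_E(Ω) → Aut_L(L^sep) be the restriction homomorphism. Then φ is injective if and only if the compositum inside Ω of (the image of) E and L^sep is all of Ω, i.e., Ω is generated as a field by E together with L^sep. -/
variable (L E Ω : Type) [Field L] [Field E] [Field Ω]
  [Algebra L E] [Algebra E Ω] [Algebra L Ω] [IsScalarTower L E Ω]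

/-- The restriction map `Aut_E(Ω) → Aut_L(L^sep)` is injective if and only if `Ω` is the
compositum of (the image of) `E` and `L^sep`. -/
theorem injective_restrictionHom_iff [IsSepClosure E Ω] :
    Function.Injective (restrictionHom L E Ω) ↔
      (IsScalarTower.toAlgHom L E Ω).fieldRange ⊔ separableClosure L Ω = ⊤ := by
  have hG : IsGalois E Ω := by
    exact IsSepClosure.isGalois
  constructor
  · intro hinj
    set M := (IsScalarTower.toAlgHom L E Ω).fieldRange ⊔ separableClosure L Ω with hM
    let K : IntermediateField E Ω := IntermediateField.adjoin E (separableClosure L Ω : Set Ω)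
    have hK : K.fixingSubgroup = ⊥ := by
      rw [eq_bot_iff]
      intro σ hσ
      rw [Subgroup.mem_bot]
      apply hinj
      rw [map_one]
      ext x
      exact (IntermediateField.mem_fixingSubgroup_iff K σ).1 hσ x
        (IntermediateField.subset_adjoin E _ x.2)
    have hT : K = ⊤ := by
      rw [← InfiniteGalois.fixedField_fixingSubgroup K, hK, IntermediateField.fixedField_bot]
    rw [eq_top_iff]
    intro x _
    have hx : x ∈ K := hT ▸ IntermediateField.mem_top
    have hE : ∀ y : E, algebraMap E Ω y ∈ M := fun y =>
      (le_sup_left : _ ≤ M) ⟨y, rfl⟩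
    induction hx using IntermediateField.adjoin_induction with
    | mem x hx => exact (le_sup_right : _ ≤ M) hx
    | algebraMap x => exact hE x
    | add x y _ _ hx hy => exact M.add_mem (hx trivial) (hy trivial)
    | inv x _ hx => exact M.inv_mem (hx trivial)
    | mul x y _ _ hx hy => exact M.mul_mem (hx trivial) (hy trivial)
  · intro h σ τ hst
    let N : IntermediateField L Ω :=
      { RingHom.eqLocusField (σ : Ω →+* Ω) (τ : Ω →+* Ω) with
        algebraMap_mem' := fun r => by
          change σ (algebraMap L Ω r) = τ (algebraMap L Ω r)
          rw [IsScalarTower.algebraMap_apply L E Ω, σ.commutes, τ.commutes] }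
    have hN : (⊤ : IntermediateField L Ω) ≤ N := by
      rw [← h]
      refine sup_le ?_ ?_
      · rintro _ ⟨y, rfl⟩
        change σ (algebraMap E Ω y) = τ (algebraMap E Ω y)
        rw [σ.commutes, τ.commutes]
      · intro x hx
        exact congrArg Subtype.val (DFunLike.congr_fun hst ⟨x, hx⟩)
    ext x
    exact hN (IntermediateField.mem_top : x ∈ _)
end

section
/- Let L ⊆ M be a field extension with L separably closed in M (every element of M separable algebraic over L lies in the image of L). Let Ω be a separable closure of M and let L^sep be the separable closure of L in Ω. Let N be an intermediate field of Ω/M that is a finite Galois extension of M and is contained in the compositum of M and L^sep inside Ω. Then there exists an intermediate field E₀ of L^sep/L, finite over L with [E₀ : L] = [N : M], such that E₀ ⊗_L M is isomorphic to N as an M-algebra; equivalently, the compositum of E₀ and M inside Ω equals N and E₀ and M are linearly disjoint over L. -/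
open scoped TensorProduct

attribute [local instance] Algebra.TensorProduct.rightAlgebra

section helpers

open IntermediateField Polynomial

theorem aux_lifts {L F Ω : Type} [Field L] [Field F] [Field Ω]
    [Algebra L Ω] [Algebra F Ω] [Algebra L F] [IsScalarTower L F Ω] [IsSepClosed Ω]
    (x : Ω) (hx : IsSeparable L x) :
    (minpoly F x).map (algebraMap F Ω) ∈ lifts (algebraMap (separableClosure L Ω) Ω) := by
  have hint : IsIntegral L x := hx.isIntegral
  have hd : (minpoly F x).map (algebraMap F Ω) ∣ (minpoly L x).map (algebraMap L Ω) := by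
    rw [IsScalarTower.algebraMap_eq L F Ω, ← Polynomial.map_map]
    exact Polynomial.map_dvd _ (minpoly.dvd_map_of_isScalarTower L F x)
  have hne : (minpoly L x).map (algebraMap L Ω) ≠ 0 :=
    ((minpoly.monic hint).map _).ne_zero
  have hs : ((minpoly L x).map (algebraMap L Ω)).Splits :=
    IsSepClosed.splits_codomain _ hx
  refine (hs.of_dvd hne hd).mem_lift_of_roots_mem_range
    ((minpoly.monic hint.tower_top).map _) _ ?_
  intro a ha
  have ha' : aeval a (minpoly L x) = 0 := by
    have := (mem_roots'.1 ha).2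
    have h2 := this.dvd hd
    rwa [IsRoot, eval_map_algebraMap] at h2
  exact ⟨⟨a, Polynomial.Separable.of_dvd hx (minpoly.dvd L a ha')⟩, rfl⟩

theorem aux_prim {L Ω : Type} [Field L] [Field Ω] [Algebra L Ω] (S : Finset Ω)
    (hS : ∀ s ∈ S, IsSeparable L s) :
    ∃ θ : Ω, IsSeparable L θ ∧ L⟮θ⟯ = adjoin L (S : Set Ω) := by
  have : FiniteDimensional L (adjoin L (S : Set Ω)) :=
    finiteDimensional_adjoin fun x hx => (hS x hx).isIntegral
  have : Algebra.IsSeparable L (adjoin L (S : Set Ω)) :=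
    (isSeparable_adjoin_iff_isSeparable L Ω).2 hS
  obtain ⟨α, hα⟩ := Field.exists_primitive_element L (adjoin L (S : Set Ω))
  have h : L⟮(α : Ω)⟯ = adjoin L (S : Set Ω) := by
    simpa only [lift_adjoin_simple, lift_top] using congr_arg lift hα
  refine ⟨α, ?_, h⟩
  rw [← isSeparable_adjoin_simple_iff_isSeparable, h]
  exact this

theorem aux_adj {L M Ω : Type} [Field L] [Field M] [Field Ω]
    [Algebra L M] [Algebra M Ω] [Algebra L Ω] [IsScalarTower L M Ω] (S T : Set Ω)
    (h : adjoin L S = adjoin L T) : adjoin M S = adjoin M T := by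
  have key : ∀ S T : Set Ω, adjoin L S = adjoin L T → adjoin M S ≤ adjoin M T := by
    intro S T h
    rw [adjoin_le_iff]
    have h1 : adjoin L T ≤ (adjoin M T).restrictScalars L := by
      rw [adjoin_le_iff]
      exact subset_adjoin M T
    intro s hs
    exact h1 (h ▸ subset_adjoin L S hs)
  exact le_antisymm (key _ _ h) (key _ _ h.symm)

theorem aux_gen {L M Ω : Type} [Field L] [Field M] [Field Ω]
    [Algebra L M] [Algebra M Ω] [Algebra L Ω] [IsScalarTower L M Ω] [IsSepClosed Ω]
    (N : IntermediateField M Ω) [FiniteDimensional M N] [Algebra.IsSeparable M N]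
    (hN : N ≤ adjoin M (separableClosure L Ω : Set Ω)) :
    ∃ α : Ω, IsSeparable L α ∧ M⟮α⟯ = N := by
  classical
  obtain ⟨n, hn⟩ := Field.exists_primitive_element M N
  have hn' : M⟮(n : Ω)⟯ = N := by
    simpa only [lift_adjoin_simple, lift_top] using congr_arg lift hn
  obtain ⟨T, hT, hnT⟩ := exists_finset_of_mem_adjoin (hN n.2)
  obtain ⟨θ, hθ, hθT⟩ := aux_prim (L := L) T fun s hs => hT hs
  have hNθ : N ≤ M⟮θ⟯ := by
    rw [aux_adj (L := L) (M := M) _ _ hθT, ← hn', adjoin_simple_le_iff]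
    exact hnT
  have hθi : IsIntegral M θ := hθ.isIntegral.tower_top
  have : FiniteDimensional M M⟮θ⟯ := adjoin.finiteDimensional hθi
  have hp : M⟮AdjoinSimple.gen M θ⟯ = ⊤ := by
    apply lift_injective
    rw [lift_adjoin_simple, lift_top, AdjoinSimple.coe_gen]
  have hK := adjoin_minpoly_coeff_of_exists_primitive_element M hp (restrict hNθ)
  have hK2 := congr_arg lift hK
  rw [lift_restrict, lift_adjoin] at hK2
  set p := (minpoly (restrict hNθ) (AdjoinSimple.gen M θ)).map
    (algebraMap (restrict hNθ) M⟮θ⟯) with hpdef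
  let S : Finset Ω := p.coeffs.image (algebraMap M⟮θ⟯ Ω)
  have hS : ∀ s ∈ S, IsSeparable L s := by
    intro s hs
    obtain ⟨c, hc, rfl⟩ := Finset.mem_image.1 hs
    obtain ⟨k, -, rfl⟩ := mem_coeffs_iff.1 hc
    letI : Algebra L (restrict hNθ) :=
      ((algebraMap M (restrict hNθ)).comp (algebraMap L M)).toAlgebra
    have : IsScalarTower L (restrict hNθ) Ω := IsScalarTower.of_algebraMap_eq fun x => by
      rw [IsScalarTower.algebraMap_apply L M Ω]
      rfl
    have hl := aux_lifts (L := L) (F := restrict hNθ) θ hθ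
    rw [lifts_iff_coeff_lifts] at hl
    obtain ⟨y, hy⟩ := hl k
    have : algebraMap M⟮θ⟯ Ω (p.coeff k) = y := by
      have h3 : minpoly (restrict hNθ) θ = minpoly (restrict hNθ) (AdjoinSimple.gen M θ) :=
        minpoly.algebraMap_eq (algebraMap M⟮θ⟯ Ω).injective (AdjoinSimple.gen M θ)
      rw [h3] at hy
      simp only [hpdef, coeff_map] at hy ⊢
      exact hy.symm
    rw [this]
    exact y.2
  obtain ⟨α, hα, hαS⟩ := aux_prim (L := L) S hS
  refine ⟨α, hα, ?_⟩
  rw [aux_adj (L := L) (M := M) _ _ hαS, ← hK2]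
  simp [S]
  rfl

theorem aux_deg {L M Ω : Type} [Field L] [Field M] [Field Ω]
    [Algebra L M] [Algebra M Ω] [Algebra L Ω] [IsScalarTower L M Ω] [IsSepClosed Ω]
    (hsc : ∀ x : M, IsAlgebraic L x → IsSeparable L x → x ∈ (algebraMap L M).range)
    (α : Ω) (hα : IsSeparable L α) :
    (minpoly M α).natDegree = (minpoly L α).natDegree := by
  have hi := hα.isIntegral
  have hl := aux_lifts (L := L) (F := M) α hα
  have hl2 : minpoly M α ∈ lifts (algebraMap L M) := by
    rw [lifts_iff_coeff_lifts] at hl ⊢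
    intro k
    obtain ⟨y, hy⟩ := hl k
    rw [coeff_map] at hy
    have hs : IsSeparable L (algebraMap M Ω ((minpoly M α).coeff k)) := hy ▸ y.2
    have hs' : IsSeparable L ((minpoly M α).coeff k) := by
      rw [IsSeparable] at hs ⊢
      rwa [minpoly.algebraMap_eq (algebraMap M Ω).injective] at hs
    exact hsc _ hs'.isIntegral.isAlgebraic hs'
  obtain ⟨q, hq, hqd, hqm⟩ := lifts_and_natDegree_eq_and_monic hl2 (minpoly.monic hi.tower_top)
  apply le_antisymm
  · have := natDegree_le_of_dvd (minpoly.dvd_map_of_isScalarTower L M α)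
      ((minpoly.monic hi).map _).ne_zero
    rwa [natDegree_map] at this
  · rw [← hqd]
    apply natDegree_le_of_dvd _ hqm.ne_zero
    apply minpoly.dvd
    rw [← aeval_map_algebraMap M, hq, minpoly.aeval]

end helpers

/-- If `L` is separably closed in `M`, `Ω` is a separable closure of `M`, and `N/M` is a
finite Galois subextension of `Ω/M` contained in the compositum of `M` and the separable
closure `L^sep` of `L` in `Ω`, then `N` descends to `L`: there is an intermediate field
`E₀` of `L^sep/L`, finite of degree `[N : M]` over `L`, with `E₀ ⊗_L M ≅ N` as
`M`-algebras. -/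
theorem descent_of_finite_galois_in_compositum
    (L M Ω : Type) [Field L] [Field M] [Field Ω]
    [Algebra L M] [Algebra M Ω] [Algebra L Ω] [IsScalarTower L M Ω]
    [IsSepClosure M Ω]
    (hsc : ∀ x : M, IsAlgebraic L x → IsSeparable L x → x ∈ (algebraMap L M).range)
    (N : IntermediateField M Ω) [FiniteDimensional M N] [IsGalois M N]
    (hN : N ≤ IntermediateField.adjoin M (separableClosure L Ω : Set Ω)) :
    ∃ E₀ : IntermediateField L (separableClosure L Ω),
      FiniteDimensional L E₀ ∧
      Module.finrank L E₀ = Module.finrank M N ∧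
      Nonempty ((E₀ ⊗[L] M) ≃ₐ[M] N) := by
  have : IsSepClosed Ω := IsSepClosure.sep_closed M
  obtain ⟨α, hα, hαN⟩ := aux_gen (L := L) N hN
  have hi : IsIntegral L α := hα.isIntegral
  let a : separableClosure L Ω := ⟨α, hα⟩
  have hai : IsIntegral L a := by
    rw [← isIntegral_algebraMap_iff (algebraMap (separableClosure L Ω) Ω).injective]
    exact hi
  have hfd : FiniteDimensional L (IntermediateField.adjoin L {a}) :=
    IntermediateField.adjoin.finiteDimensional hai
  have hmin : minpoly L a = minpoly L α :=
    (minpoly.algebraMap_eq (algebraMap (separableClosure L Ω) Ω).injective a).symm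
  have hdeg : Module.finrank L (IntermediateField.adjoin L {a}) = Module.finrank M N := by
    rw [IntermediateField.adjoin.finrank hai, ← hαN,
      IntermediateField.adjoin.finrank hi.tower_top, hmin, aux_deg hsc α hα]
  refine ⟨IntermediateField.adjoin L {a}, hfd, hdeg, ?_⟩
  set E := IntermediateField.adjoin L {a} with hE
  let f : E →ₐ[L] Ω := (separableClosure L Ω).val.comp E.val
  let g : M ⊗[L] E →ₐ[M] Ω :=
    Algebra.TensorProduct.lift (Algebra.ofId M Ω) f (fun _ _ => Commute.all _ _)
  have hfN : ∀ x : E, f x ∈ N := by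
    have h1 : E ≤ (N.restrictScalars L).comap (separableClosure L Ω).val := by
      rw [hE, IntermediateField.adjoin_simple_le_iff]
      change α ∈ N
      rw [← hαN]
      exact IntermediateField.mem_adjoin_simple_self M α
    exact fun x => h1 x.2
  have hrange : g.range = N.toSubalgebra := by
    apply le_antisymm
    · rintro _ ⟨t, rfl⟩
      induction t using TensorProduct.induction_on with
      | zero => simp
      | tmul m e =>
        have : g (m ⊗ₜ e) = algebraMap M Ω m * f e := by
          simp [g, Algebra.ofId_apply]
        change g (m ⊗ₜ e) ∈ N
        rw [this]
        exact N.mul_mem (N.algebraMap_mem m) (hfN e)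
      | add x y hx hy =>
        have h := g.map_add x y
        change g.toRingHom (x + y) ∈ N
        rw [h]
        exact N.add_mem hx hy
    · rw [← hαN, IntermediateField.adjoin_simple_toSubalgebra_of_isAlgebraic
        hi.tower_top.isAlgebraic]
      rw [Algebra.adjoin_le_iff, Set.singleton_subset_iff]
      refine ⟨1 ⊗ₜ ⟨a, IntermediateField.mem_adjoin_simple_self L a⟩, ?_⟩
      simp [g, f, a]
  let g' : M ⊗[L] E →ₐ[M] N :=
    (Subalgebra.equivOfEq _ _ hrange).toAlgHom.comp g.rangeRestrict
  have hsurj : Function.Surjective g' :=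
    (Subalgebra.equivOfEq _ _ hrange).surjective.comp g.rangeRestrict_surjective
  have hfr : Module.finrank M (M ⊗[L] E) = Module.finrank M N := by
    rw [Module.finrank_baseChange, hdeg]
  have hinj : Function.Injective g' :=
    (LinearMap.injective_iff_surjective_of_finrank_eq_finrank (f := g'.toLinearMap) hfr).2 hsurj
  exact ⟨(Algebra.TensorProduct.commRight L M E).symm.trans
    (AlgEquiv.ofBijective g' ⟨hinj, hsurj⟩)⟩
end
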